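/- Let A, C, σ, Ra be strictly positive real parameters. Then the Glukhovsky–Dolzhansky system has no exponential factors: if g, h ∈ ℝ[x,y,z] are coprime polynomials with h ≠ 0, and L ∈ ℝ[x,y,z] is a polynomial of degree at most 1 such that h·X(g) − g·X(h) = L·h² (which expresses that exp(g/h) satisfies X(exp(g/h)) = L·exp(g/h)), then g and h are both constant polynomials, so exp(g/h) is a constant function. -/

import Mathlib

open MvPolynomial

/-- The derivation associated with the Glukhovsky–Dolzhansky system
`ẋ = A y z + C z − σ x, ẏ = −x z + Ra − y, ż = −z + x y`,
acting on `ℝ[x,y,z]` (variables `X 0 = x`, `X 1 = y`, `X 2 = z`). -/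
noncomputable def gdDeriv (A C σ Ra : ℝ) (f : MvPolynomial (Fin 3) ℝ) :
    MvPolynomial (Fin 3) ℝ :=
  (MvPolynomial.C A * X 1 * X 2 + MvPolynomial.C C * X 2 - MvPolynomial.C σ * X 0) *
      pderiv (0 : Fin 3) f
    + (-(X 0 * X 2) + MvPolynomial.C Ra - X 1) * pderiv (1 : Fin 3) f
    + (-X 2 + X 0 * X 1) * pderiv (2 : Fin 3) f

/-!
The quadratic part of the vector field is the Euler top `Q = A y z ∂x - x z ∂y + x y ∂z`, with
first integrals `I₁ = x² + A y²` and `I₂ = z² + y²`. Split a polynomial into its four parities in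
`(x, z)` and write each part in terms of `I₁`, `I₂` and `y`: on each part `Q` acts by an operator
`β ↦ 2 W β' + W' β` on `ℝ[I₁,I₂][y]`, where `W` is one of `1`, `x²`, `z²`, `x² z²`. Degrees in `y`
show that the kernel of `Q` is `ℝ[I₁,I₂]`, that no nonzero polynomial in `y` of degree at most `2`
over `ℝ[I₁,I₂]` is in its image, and that a linear cofactor of `Q` is `ρ m y` with `ρ² = A` and
`m ∈ ℕ`.

If `X(h) = K h`, the leading form `F` of `h` is a Darboux polynomial of `Q`, so `K = k₀ + ρ m y`
and `F (x - ρ z)ᵐ ∈ ℝ[I₁,I₂]`. The next homogeneous level of `X(h) = K h` (the next two if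
`σ = 1`) forces `deg h = C ρ m / A - k₀` and `F(0,0,1) ≠ 0`.

Coprimality of `g` and `h` turns the equation of the exponential factor into `X(h) = K h` and
`X(g) = K g + L h`. A parity argument and the formula for the degree give `deg g ≤ deg h`; the top
levels, evaluated at `(0,0,1)` where `Q` vanishes, then give `L = 0`. Now `g - t h` is a Darboux
polynomial with the same cofactor for every `t`. Choosing `t` so that its component of degree
`deg h` vanishes at `(0,0,1)` makes it zero, whence `g = t h`.
-/

namespace GlukhovskyDolzhansky

open scoped Polynomial

local notation "ℝ[x,y,z]" => MvPolynomial (Fin 3) ℝ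

local notation "ℝ[I₁,I₂]" => MvPolynomial (Fin 2) ℝ

section Derivations

variable {ι κ R : Type*} [CommRing R]

theorem derivation_aeval [Fintype ι] (d : Derivation R (MvPolynomial κ R) (MvPolynomial κ R))
    (u : ι → MvPolynomial κ R) (p : MvPolynomial ι R) :
    d (aeval u p) = ∑ i, aeval u (pderiv i p) * d (u i) := by
  classical
  induction p using MvPolynomial.induction_on with
  | C a => simp
  | add p q hp hq => simp only [map_add, hp, hq, add_mul, Finset.sum_add_distrib]
  | mul_X p i hp =>
    have hX : ∑ j, aeval u (pderiv j (X i : MvPolynomial ι R)) * d (u j) = d (u i) := by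
      rw [Finset.sum_eq_single i (by simp +contextual) (by simp), pderiv_X_self, map_one, one_mul]
    simp only [map_mul, aeval_X, Derivation.leibniz, hp, smul_eq_mul, map_add, add_mul,
      Finset.sum_add_distrib, mul_assoc, ← Finset.mul_sum, hX]

theorem derivation_algHom_comm {d d' : Derivation R (MvPolynomial ι R) (MvPolynomial ι R)}
    {φ : MvPolynomial ι R →ₐ[R] MvPolynomial ι R} (h : ∀ i, d (φ (X i)) = φ (d' (X i)))
    (f : MvPolynomial ι R) : d (φ f) = φ (d' f) := by
  induction f using MvPolynomial.induction_on with
  | C a => simp [← MvPolynomial.algebraMap_eq]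
  | add p q hp hq => simp only [map_add, hp, hq]
  | mul_X p i hp => simp only [map_mul, map_add, Derivation.leibniz, hp, h, smul_eq_mul]

theorem pderiv_pderiv_comm (i j : ι) (f : MvPolynomial ι R) :
    pderiv i (pderiv j f) = pderiv j (pderiv i f) := by
  classical
  have h : ⁅pderiv (R := R) i, pderiv (R := R) j⁆ = 0 := by
    ext l : 1
    rw [Derivation.commutator_apply]
    simp [pderiv_X, Pi.single_apply, apply_ite]
  simpa [Derivation.commutator_apply, sub_eq_zero] using DFunLike.congr_fun h f

theorem mul_derivation_pow (d : Derivation R (MvPolynomial ι R) (MvPolynomial ι R))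
    (f : MvPolynomial ι R) (m : ℕ) : f * d (f ^ m) = m * f ^ m * d f := by
  rcases m with _ | m
  · simp
  · simp only [Derivation.leibniz_pow, Nat.add_sub_cancel, smul_eq_mul, nsmul_eq_mul]
    ring

end Derivations

section HomogeneousComponents

variable {ι R : Type*} [CommRing R]

theorem eq_zero_of_homogeneousComponent_eq_zero {f : MvPolynomial ι R}
    (h : ∀ n, homogeneousComponent n f = 0) : f = 0 := by
  rw [← sum_homogeneousComponent f, Finset.sum_eq_zero fun n _ ↦ h n]

theorem eq_C_of_isHomogeneous_zero {f : MvPolynomial ι R} (hf : f.IsHomogeneous 0) :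
    f = C (coeff 0 f) :=
  totalDegree_eq_zero_iff_eq_C.1 ((totalDegree_zero_iff_isHomogeneous ι).2 hf)

/-- The leading form of `f`: its homogeneous component of top degree. -/
noncomputable def leadingForm (f : MvPolynomial ι R) : MvPolynomial ι R :=
  homogeneousComponent f.totalDegree f

theorem isHomogeneous_leadingForm (f : MvPolynomial ι R) :
    (leadingForm f).IsHomogeneous f.totalDegree :=
  homogeneousComponent_isHomogeneous _ f

theorem leadingForm_ne_zero {f : MvPolynomial ι R} (hf : f ≠ 0) : leadingForm f ≠ 0 := by
  obtain ⟨e, he, hdeg⟩ := Finset.exists_mem_eq_sup f.support (support_nonempty.2 hf)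
    fun e ↦ e.degree
  intro h
  have hcoeff := congrArg (coeff e) h
  rw [leadingForm, coeff_homogeneousComponent,
    if_pos (show e.degree = f.totalDegree from hdeg.symm), coeff_zero] at hcoeff
  exact mem_support_iff.1 he hcoeff

section GradedMap

variable {κ : Type*} {φ : ℕ → ℕ} {T : MvPolynomial ι R →ₗ[R] MvPolynomial κ R}

theorem homogeneousComponent_map_of_notMem_range
    (hT : ∀ n f, f.IsHomogeneous n → (T f).IsHomogeneous (φ n)) {m : ℕ} (hm : m ∉ Set.range φ)
    (f : MvPolynomial ι R) : homogeneousComponent m (T f) = 0 := by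
  rw [← sum_homogeneousComponent f, map_sum, map_sum]
  refine Finset.sum_eq_zero fun n _ ↦ ?_
  rw [homogeneousComponent_of_mem (hT _ _ (homogeneousComponent_isHomogeneous n f)),
    if_neg fun h ↦ hm ⟨n, h.symm⟩]

theorem homogeneousComponent_map (hφ : Function.Injective φ)
    (hT : ∀ n f, f.IsHomogeneous n → (T f).IsHomogeneous (φ n)) (n : ℕ) (f : MvPolynomial ι R) :
    homogeneousComponent (φ n) (T f) = T (homogeneousComponent n f) := by
  have hcomp (m : ℕ) : homogeneousComponent (φ n) (T (homogeneousComponent m f)) =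
      if m = n then T (homogeneousComponent m f) else 0 := by
    rw [homogeneousComponent_of_mem (hT _ _ (homogeneousComponent_isHomogeneous m f))]
    simp [hφ.eq_iff, eq_comm]
  conv_lhs => rw [← sum_homogeneousComponent f, map_sum, map_sum]
  simp only [hcomp, Finset.sum_ite_eq', Finset.mem_range]
  split_ifs with h
  · rfl
  · rw [homogeneousComponent_eq_zero _ _ (by omega), map_zero]

end GradedMap

theorem homogeneousComponent_pderiv (n : ℕ) (i : ι) (f : MvPolynomial ι R) :
    homogeneousComponent n (pderiv i f) = pderiv i (homogeneousComponent (n + 1) f) := by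
  ext d
  by_cases h : d.degree = n <;> simp [coeff_homogeneousComponent, coeff_pderiv, h]

theorem isHomogeneous_derivation [Finite ι] {r m : ℕ}
    {d : Derivation R (MvPolynomial ι R) (MvPolynomial ι R)}
    (hd : ∀ i, (d (X i)).IsHomogeneous (r + 1)) {f : MvPolynomial ι R} (hf : f.IsHomogeneous m) :
    (d f).IsHomogeneous (m + r) := by
  cases nonempty_fintype ι
  have hsum : d f = ∑ i, pderiv i f * d (X i) := by
    simpa using derivation_aeval d X f
  rw [hsum]
  refine IsHomogeneous.sum _ _ _ fun i _ ↦ ?_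
  rcases m with _ | m
  · rw [eq_C_of_isHomogeneous_zero hf]
    simpa using isHomogeneous_zero ι R _
  · exact (show m + 1 + r = m + (r + 1) by omega) ▸ hf.pderiv.mul (hd i)

/-- The linear form `∑ i, k i * X i`. -/
noncomputable def linearForm [Fintype ι] (k : ι → R) : MvPolynomial ι R :=
  ∑ i, C (k i) * X i

theorem isHomogeneous_linearForm [Fintype ι] (k : ι → R) : (linearForm k).IsHomogeneous 1 :=
  IsHomogeneous.sum _ _ _ fun i _ ↦ isHomogeneous_C_mul_X (k i) i

theorem exists_eq_C_add_linearForm [Fintype ι] {f : MvPolynomial ι R} (hf : f.totalDegree ≤ 1) :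
    ∃ c k, f = C c + linearForm k := by
  have hsum : f = homogeneousComponent 0 f + homogeneousComponent 1 f := by
    conv_lhs => rw [← sum_homogeneousComponent f]
    rw [Finset.sum_subset (Finset.range_mono (show f.totalDegree + 1 ≤ 2 by omega))
      fun n _ hn ↦ homogeneousComponent_eq_zero _ _ (by simpa using hn), Finset.sum_range_succ,
      Finset.sum_range_one]
  have hmem := homogeneousComponent_mem 1 f
  rw [homogeneousSubmodule_one_eq_span_X, Submodule.mem_span_range_iff_exists_fun] at hmem
  obtain ⟨k, hk⟩ := hmem
  refine ⟨coeff 0 f, k, hsum.trans ?_⟩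
  rw [homogeneousComponent_zero, ← hk]
  simp only [linearForm, smul_eq_C_mul]

/-- The homogeneous component of degree `n - 1` of `f`, with the convention that the component of
degree `-1` vanishes. Indexing by `n` keeps the components of a product with a linear form free of
case distinctions. -/
noncomputable def prevComponent (n : ℕ) (f : MvPolynomial ι R) : MvPolynomial ι R :=
  match n with
  | 0 => 0
  | n + 1 => homogeneousComponent n f

theorem homogeneousComponent_map_eq_map_prevComponent
    {T : MvPolynomial ι R →ₗ[R] MvPolynomial ι R}
    (hT : ∀ n f, f.IsHomogeneous n → (T f).IsHomogeneous (n + 1)) (n : ℕ) (f : MvPolynomial ι R) :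
    homogeneousComponent n (T f) = T (prevComponent n f) := by
  rcases n with _ | n
  · rw [homogeneousComponent_map_of_notMem_range hT (by simp), prevComponent, map_zero]
  · exact homogeneousComponent_map (add_left_injective 1) hT n f

theorem homogeneousComponent_affine_mul [Fintype ι] (c : R) (k : ι → R) (n : ℕ)
    (f : MvPolynomial ι R) : homogeneousComponent n ((C c + linearForm k) * f) =
      C c * homogeneousComponent n f + linearForm k * prevComponent n f := by
  have hmul := homogeneousComponent_map_eq_map_prevComponent
    (T := LinearMap.mulLeft R (linearForm k))
    (fun n f hf ↦ add_comm n 1 ▸ (isHomogeneous_linearForm k).mul hf) n f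
  simp only [LinearMap.mulLeft_apply] at hmul
  rw [add_mul, map_add, homogeneousComponent_C_mul, hmul]

theorem eval_single_one_of_isHomogeneous [Finite ι] [DecidableEq ι] {f : MvPolynomial ι R} {n : ℕ}
    (hf : f.IsHomogeneous n) (i : ι) :
    eval (Pi.single i 1) f = coeff (Finsupp.single i n) f := by
  cases nonempty_fintype ι
  rw [eval_eq', Finset.sum_eq_single (Finsupp.single i n)]
  · rw [Finset.prod_eq_one, mul_one]
    intro j _
    rcases eq_or_ne j i with rfl | hj
    · simp
    · simp [hj]
  · intro d hd hne
    obtain ⟨j, hji, hj⟩ : ∃ j ≠ i, d j ≠ 0 := by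
      by_contra! h
      refine hne ?_
      have hdi : d = Finsupp.single i (d i) := by
        ext j
        rcases eq_or_ne j i with rfl | hj
        · simp
        · simp [h j hj, hj]
      rw [hdi] at hd ⊢
      congr 1
      simpa [Finsupp.weight_single] using hf (mem_support_iff.1 hd)
    rw [Finset.prod_eq_zero (Finset.mem_univ j) (by simp [hji, hj]), mul_zero]
  · intro h
    rw [notMem_support_iff.1 h, zero_mul]

end HomogeneousComponents

section BinaryForms

variable {R : Type*} [CommRing R]

theorem X_zero_dvd_of_isHomogeneous {H : MvPolynomial (Fin 2) R} {n : ℕ} (hH : H.IsHomogeneous n)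
    (h : eval (Pi.single 1 1) H = 0) : X 0 ∣ H := by
  rw [X_dvd_iff_modMonomial_eq_zero]
  ext d
  by_cases hd : Finsupp.single 0 1 ≤ d
  · rw [coeff_modMonomial_of_le _ hd, coeff_zero]
  · rw [coeff_modMonomial_of_not_le _ hd, coeff_zero]
    by_contra hne
    have hd0 : d 0 = 0 := by simpa using hd
    have hdeg : d 1 = n := by
      have := hH hne
      simpa [Finsupp.weight_apply, Finsupp.sum_fintype, hd0] using this
    have hdn : d = Finsupp.single 1 n := by
      ext i
      fin_cases i <;> simp [hd0, hdeg]
    rw [eval_single_one_of_isHomogeneous hH, ← hdn] at h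
    exact hne h

theorem eval_ne_zero_of_mul_pderiv_eq [IsDomain R] [CharZero R] [UniqueFactorizationMonoid R]
    {H P Q : MvPolynomial (Fin 2) R} {n : ℕ}
    (hH0 : H ≠ 0) (hH : H.IsHomogeneous n) (hP : eval (Pi.single 1 1) P ≠ 0)
    (h : P * pderiv 0 H = Q * H) : eval (Pi.single 1 1) H ≠ 0 := by
  have hprime : Prime (X 0 : MvPolynomial (Fin 2) R) := X_prime
  obtain ⟨U, hU, hXU⟩ :=
    (FiniteMultiplicity.of_prime_left hprime hH0).exists_eq_pow_mul_and_not_dvd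
  generalize multiplicity (X 0) H = j at hU
  intro hzero
  rcases j with _ | j
  · rw [pow_zero, one_mul] at hU
    exact hXU (hU ▸ X_zero_dvd_of_isHomogeneous hH hzero)
  · have hcancel : C (j + 1 : R) * P * U = X 0 * (Q * U - P * pderiv 0 U) := by
      refine mul_left_cancel₀ (pow_ne_zero j hprime.ne_zero) ?_
      rw [hU] at h
      simp only [Derivation.leibniz, Derivation.leibniz_pow, pderiv_X_self, smul_eq_mul,
        nsmul_eq_mul, Nat.add_sub_cancel, Nat.cast_add, Nat.cast_one] at h
      simp only [map_add, map_natCast, map_one]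
      linear_combination h
    rcases (hprime.dvd_mul.1 ⟨_, hcancel⟩) with hdvd | hdvd
    · obtain ⟨V, hV⟩ := hdvd
      have := congrArg (eval (Pi.single 1 1)) hV
      exact absurd this (by simp [hP, Nat.cast_add_one_ne_zero])
    · exact hXU hdvd

end BinaryForms

section TwistedDerivative

variable {R : Type*} [CommRing R]

/-- The operator `β ↦ 2 W β' + W' β`, that is `2 √W (√W β)'`: it is the form taken by a derivation
on the odd part of a quadratic extension by `√W`. -/
noncomputable def twistedDerivative (W β : R[X]) : R[X] :=
  2 * W * Polynomial.derivative β + Polynomial.derivative W * β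

theorem coeff_X_mul_twistedDerivative {W β : R[X]} {d n : ℕ} (hW : W.natDegree ≤ d)
    (hβ : β.natDegree ≤ n) : (Polynomial.X * twistedDerivative W β).coeff (n + d) =
      (2 * n + d) * W.coeff d * β.coeff n := by
  have hcoeff (p : R[X]) (j : ℕ) :
      (Polynomial.X * Polynomial.derivative p).coeff j = j * p.coeff j := by
    rcases j with _ | j
    · simp
    · rw [Polynomial.coeff_X_mul, Polynomial.coeff_derivative]
      push_cast
      ring
  have hdeg {p : R[X]} {j : ℕ} (hp : p.natDegree ≤ j) :
      (Polynomial.X * Polynomial.derivative p).natDegree ≤ j :=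
    Polynomial.natDegree_le_iff_coeff_eq_zero.2 fun i hi ↦ by
      rw [hcoeff, Polynomial.coeff_eq_zero_of_natDegree_lt (hp.trans_lt hi), mul_zero]
  have hsplit : Polynomial.X * twistedDerivative W β =
      2 * ((Polynomial.X * Polynomial.derivative β) * W) +
        β * (Polynomial.X * Polynomial.derivative W) := by
    rw [twistedDerivative]
    ring
  rw [hsplit, Polynomial.coeff_add, Polynomial.coeff_ofNat_mul,
    Polynomial.coeff_mul_add_eq_of_natDegree_le (hdeg hβ) hW,
    Polynomial.coeff_mul_add_eq_of_natDegree_le hβ (hdeg hW), hcoeff, hcoeff]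
  ring

variable [IsDomain R] [CharZero R]

theorem eq_zero_of_natDegree_twistedDerivative_lt {W β : R[X]}
    (h : (twistedDerivative W β).natDegree + 1 < W.natDegree) : β = 0 := by
  by_contra hβ
  have hcoeff := coeff_X_mul_twistedDerivative le_rfl le_rfl (W := W) (β := β)
  have hdeg : (Polynomial.X * twistedDerivative W β).natDegree < β.natDegree + W.natDegree := by
    have hmul := Polynomial.natDegree_mul_le (p := Polynomial.X) (q := twistedDerivative W β)
    rw [Polynomial.natDegree_X] at hmul
    omega
  rw [Polynomial.coeff_eq_zero_of_natDegree_lt hdeg] at hcoeff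
  have hfactor : (2 * β.natDegree + W.natDegree : R) ≠ 0 := by
    exact_mod_cast show 2 * β.natDegree + W.natDegree ≠ 0 by omega
  have hW : W ≠ 0 := by
    rintro rfl
    simp at h
  exact mul_ne_zero (mul_ne_zero hfactor (Polynomial.leadingCoeff_ne_zero.2 hW))
    (Polynomial.leadingCoeff_ne_zero.2 hβ) hcoeff.symm

theorem exists_sq_eq_of_twistedDerivative_eq {U V δ α : R[X]} {κ : R} {i j : ℕ} (hij : i + j = 1)
    (hU : U.natDegree ≤ 2 * i + 2) (hV : V.natDegree ≤ 2 * j)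
    (hδ : twistedDerivative U δ = Polynomial.C κ * Polynomial.X * α)
    (hα : twistedDerivative V α = Polynomial.C κ * Polynomial.X * δ) (hne : ¬(δ = 0 ∧ α = 0)) :
    ∃ m : ℕ, κ ^ 2 = U.coeff (2 * i + 2) * V.coeff (2 * j) * (2 * m) ^ 2 := by
  rcases eq_or_ne κ 0 with rfl | hκ
  · exact ⟨0, by simp⟩
  set n := δ.natDegree
  have hXX (p : R[X]) (l : ℕ) :
      (Polynomial.X * (Polynomial.C κ * Polynomial.X * p)).coeff (l + 2) = κ * p.coeff l := by
    rw [show Polynomial.X * (Polynomial.C κ * Polynomial.X * p) =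
      Polynomial.C κ * (p * Polynomial.X ^ 2) by ring, Polynomial.coeff_C_mul,
      Polynomial.coeff_mul_X_pow]
  have hα_deg : α.natDegree ≤ n + 2 * i := by
    refine Polynomial.natDegree_le_iff_coeff_eq_zero.2 fun l hl ↦ ?_
    have hbound := coeff_X_mul_twistedDerivative hU (show δ.natDegree ≤ l - 2 * i by omega)
    rw [hδ, show l - 2 * i + (2 * i + 2) = l + 2 by omega, hXX,
      Polynomial.coeff_eq_zero_of_natDegree_lt (show δ.natDegree < l - 2 * i by omega),
      mul_zero] at hbound
    exact (mul_eq_zero.1 hbound).resolve_left hκ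
  have htop_α := coeff_X_mul_twistedDerivative hU (le_refl n)
  have htop_δ := coeff_X_mul_twistedDerivative hV hα_deg
  rw [hδ, show n + (2 * i + 2) = n + 2 * i + 2 by ring, hXX] at htop_α
  rw [hα, show n + 2 * i + 2 * j = n + 2 by omega, hXX] at htop_δ
  have hδ0 : δ.coeff n ≠ 0 := by
    refine Polynomial.leadingCoeff_ne_zero.2 ?_
    rintro rfl
    refine hne ⟨rfl, ?_⟩
    simpa [twistedDerivative, hκ] using hδ.symm
  refine ⟨n + i + 1, mul_right_cancel₀ hδ0 ?_⟩
  have hj : (j : R) = 1 - i := by rw [eq_sub_iff_add_eq']; exact_mod_cast hij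
  push_cast [hj] at htop_α htop_δ ⊢
  linear_combination κ * htop_δ + (2 * n + 2 * i + 2) * V.coeff (2 * j) * htop_α

end TwistedDerivative

section Reflection

variable {ι R : Type*} [DecidableEq ι] [CommRing R]

/-- The substitution `X i ↦ -X i`. -/
noncomputable def reflect (i : ι) : MvPolynomial ι R →ₐ[R] MvPolynomial ι R :=
  aeval (Function.update X i (-X i))

@[simp]
theorem reflect_X_self (i : ι) : reflect i (X i : MvPolynomial ι R) = -X i := by
  rw [reflect, aeval_X, Function.update_self]

theorem reflect_X_of_ne {i j : ι} (h : j ≠ i) : reflect i (X j : MvPolynomial ι R) = X j := by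
  rw [reflect, aeval_X, Function.update_of_ne h]

theorem reflect_reflect (i : ι) (f : MvPolynomial ι R) : reflect i (reflect i f) = f := by
  have h : (reflect i).comp (reflect i) = AlgHom.id R (MvPolynomial ι R) := by
    refine MvPolynomial.algHom_ext fun j ↦ ?_
    rcases eq_or_ne j i with rfl | hj
    · simp
    · simp [reflect_X_of_ne hj]
  exact DFunLike.congr_fun h f

end Reflection

/-- The derivation of the Euler top `ẋ = a y z, ẏ = -x z, ż = b x y`. For `(a, b) = (A, 1)` it is
the quadratic part of the Glukhovsky–Dolzhansky system. -/
noncomputable def eulerTop (a b : ℝ) : Derivation ℝ ℝ[x,y,z] ℝ[x,y,z] :=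
  mkDerivation ℝ ![C a * X 1 * X 2, -(X 0 * X 2), C b * X 0 * X 1]

/-- The substitution `I₁ ↦ x² + a y²`, `I₂ ↦ z² + b y²` of the two first integrals of
`eulerTop a b`. -/
noncomputable def ofIntegrals (a b : ℝ) : ℝ[I₁,I₂] →ₐ[ℝ] ℝ[x,y,z] :=
  aeval ![X 0 ^ 2 + C a * X 1 ^ 2, X 2 ^ 2 + C b * X 1 ^ 2]

/-- The extension of `ofIntegrals a b` to `ℝ[I₁,I₂][Y]` by `Y ↦ y`; its image is the ring of
polynomials even in `x` and in `z`. -/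
noncomputable def ofIntegralsY (a b : ℝ) : ℝ[I₁,I₂][X] →+* ℝ[x,y,z] :=
  Polynomial.eval₂RingHom (ofIntegrals a b : ℝ[I₁,I₂] →+* ℝ[x,y,z]) (X 1)

/-- The polynomial whose parts of the four parities in `(x, z)` are `α`, `x β`, `z γ`, `x z δ`,
with `α, β, γ, δ` written in terms of `I₁`, `I₂` and `y`. -/
noncomputable def ofParityParts (a b : ℝ) (α β γ δ : ℝ[I₁,I₂][X]) : ℝ[x,y,z] :=
  ofIntegralsY a b α + X 0 * ofIntegralsY a b β + X 2 * ofIntegralsY a b γ +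
    X 0 * X 2 * ofIntegralsY a b δ

/-- `x²` in terms of `I₁` and `y`. -/
noncomputable def xSq (a : ℝ) : ℝ[I₁,I₂][X] :=
  Polynomial.C (X 0) - Polynomial.C (C a) * Polynomial.X ^ 2

/-- `z²` in terms of `I₂` and `y`. -/
noncomputable def zSq (b : ℝ) : ℝ[I₁,I₂][X] :=
  Polynomial.C (X 1) - Polynomial.C (C b) * Polynomial.X ^ 2

section EulerTop

variable {a b : ℝ}

@[simp] theorem eulerTop_X_zero : eulerTop a b (X 0) = C a * X 1 * X 2 := mkDerivation_X ..

@[simp] theorem eulerTop_X_one : eulerTop a b (X 1) = -(X 0 * X 2) := mkDerivation_X ..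

@[simp] theorem eulerTop_X_two : eulerTop a b (X 2) = C b * X 0 * X 1 := mkDerivation_X ..

theorem eulerTop_apply (f : ℝ[x,y,z]) : eulerTop a b f =
    C a * X 1 * X 2 * pderiv 0 f - X 0 * X 2 * pderiv 1 f + C b * X 0 * X 1 * pderiv 2 f := by
  have h := derivation_aeval (eulerTop a b) X f
  simp only [aeval_X_left_apply, Fin.sum_univ_three, eulerTop_X_zero, eulerTop_X_one,
    eulerTop_X_two] at h
  linear_combination h

@[simp] theorem ofIntegrals_C (r : ℝ) : ofIntegrals a b (C r) = C r := by
  rw [ofIntegrals, aeval_C, MvPolynomial.algebraMap_eq]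

@[simp] theorem ofIntegrals_X_zero : ofIntegrals a b (X 0) = X 0 ^ 2 + C a * X 1 ^ 2 := aeval_X ..

@[simp] theorem ofIntegrals_X_one : ofIntegrals a b (X 1) = X 2 ^ 2 + C b * X 1 ^ 2 := aeval_X ..

@[simp] theorem ofIntegralsY_C (H : ℝ[I₁,I₂]) :
    ofIntegralsY a b (Polynomial.C H) = ofIntegrals a b H := Polynomial.eval₂_C ..

@[simp] theorem ofIntegralsY_X : ofIntegralsY a b Polynomial.X = X 1 := Polynomial.eval₂_X ..

@[simp] theorem ofIntegralsY_xSq : ofIntegralsY a b (xSq a) = X 0 ^ 2 := by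
  simp only [xSq, map_sub, map_mul, map_pow, ofIntegralsY_C, ofIntegralsY_X, ofIntegrals_X_zero,
    ofIntegrals_C, add_sub_cancel_right]

@[simp] theorem ofIntegralsY_zSq : ofIntegralsY a b (zSq b) = X 2 ^ 2 := by
  simp only [zSq, map_sub, map_mul, map_pow, ofIntegralsY_C, ofIntegralsY_X, ofIntegrals_X_one,
    ofIntegrals_C, add_sub_cancel_right]

theorem derivation_ofIntegrals (d : Derivation ℝ ℝ[x,y,z] ℝ[x,y,z]) (H : ℝ[I₁,I₂]) :
    d (ofIntegrals a b H) =
      ofIntegrals a b (pderiv 0 H) * (2 * X 0 * d (X 0) + 2 * C a * X 1 * d (X 1)) +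
      ofIntegrals a b (pderiv 1 H) * (2 * X 2 * d (X 2) + 2 * C b * X 1 * d (X 1)) := by
  have hC (r : ℝ) : d (C r) = 0 := d.map_algebraMap r
  rw [ofIntegrals, derivation_aeval, Fin.sum_univ_two]
  simp only [Matrix.cons_val_zero, Matrix.cons_val_one, map_add, Derivation.leibniz,
    Derivation.leibniz_pow, hC, smul_eq_mul, nsmul_eq_mul]
  push_cast
  ring

@[simp] theorem eulerTop_ofIntegrals (H : ℝ[I₁,I₂]) : eulerTop a b (ofIntegrals a b H) = 0 := by
  rw [derivation_ofIntegrals, eulerTop_X_zero, eulerTop_X_one, eulerTop_X_two]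
  ring

theorem eulerTop_ofIntegralsY (p : ℝ[I₁,I₂][X]) : eulerTop a b (ofIntegralsY a b p) =
    -(X 0 * X 2) * ofIntegralsY a b (Polynomial.derivative p) := by
  induction p using Polynomial.induction_on' with
  | add p q hp hq => simp only [map_add, hp, hq, mul_add]
  | monomial n H =>
    rw [← Polynomial.C_mul_X_pow_eq_monomial]
    simp only [map_mul, map_pow, map_natCast, ofIntegralsY_C, ofIntegralsY_X, Derivation.leibniz,
      Derivation.leibniz_pow, eulerTop_ofIntegrals, eulerTop_X_one,
      Polynomial.derivative_C_mul_X_pow, smul_eq_mul, nsmul_eq_mul]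
    ring

theorem two_mul_eulerTop_ofParityParts (α β γ δ : ℝ[I₁,I₂][X]) :
    2 * eulerTop a b (ofParityParts a b α β γ δ) =
      -ofParityParts a b (twistedDerivative (xSq a * zSq b) δ) (twistedDerivative (zSq b) γ)
        (twistedDerivative (xSq a) β) (twistedDerivative 1 α) := by
  have hx : ofIntegralsY a b (Polynomial.derivative (xSq a)) = -(2 * C a * X 1) := by
    simp only [xSq, map_sub, map_add, map_mul, map_neg, map_one, Polynomial.derivative_C,
      Polynomial.derivative_mul, Polynomial.derivative_X_pow_succ, Nat.cast_one, zero_mul, zero_add,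
      zero_sub, pow_one, ofIntegralsY_C, ofIntegralsY_X, ofIntegrals_C]
    ring
  have hz : ofIntegralsY a b (Polynomial.derivative (zSq b)) = -(2 * C b * X 1) := by
    simp only [zSq, map_sub, map_add, map_mul, map_neg, map_one, Polynomial.derivative_C,
      Polynomial.derivative_mul, Polynomial.derivative_X_pow_succ, Nat.cast_one, zero_mul, zero_add,
      zero_sub, pow_one, ofIntegralsY_C, ofIntegralsY_X, ofIntegrals_C]
    ring
  simp only [ofParityParts, twistedDerivative, map_add, map_mul, map_one, map_ofNat,
    Derivation.leibniz, eulerTop_ofIntegralsY, eulerTop_X_zero, eulerTop_X_two,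
    Polynomial.derivative_mul, Polynomial.derivative_one, ofIntegralsY_xSq, ofIntegralsY_zSq,
    hx, hz, smul_eq_mul, map_zero]
  ring

theorem exists_eq_ofParityParts (a b : ℝ) (f : ℝ[x,y,z]) :
    ∃ α β γ δ, f = ofParityParts a b α β γ δ := by
  induction f using MvPolynomial.induction_on with
  | C r => exact ⟨Polynomial.C (C r), 0, 0, 0, by simp [ofParityParts]⟩
  | add p q hp hq =>
    obtain ⟨α, β, γ, δ, rfl⟩ := hp
    obtain ⟨α', β', γ', δ', rfl⟩ := hq
    refine ⟨α + α', β + β', γ + γ', δ + δ', ?_⟩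
    simp only [ofParityParts, map_add]
    ring
  | mul_X p i hp =>
    obtain ⟨α, β, γ, δ, rfl⟩ := hp
    fin_cases i
    · refine ⟨xSq a * β, α, xSq a * δ, γ, ?_⟩
      simp only [ofParityParts, map_mul, ofIntegralsY_xSq, Fin.zero_eta]
      ring
    · refine ⟨Polynomial.X * α, Polynomial.X * β, Polynomial.X * γ, Polynomial.X * δ, ?_⟩
      simp only [ofParityParts, map_mul, ofIntegralsY_X, Fin.mk_one]
      ring
    · refine ⟨zSq b * γ, zSq b * δ, α, β, ?_⟩
      simp only [ofParityParts, map_mul, ofIntegralsY_zSq, Fin.reduceFinMk]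
      ring

theorem reflect_ofIntegralsY {i : Fin 3} (hi : i ≠ 1) (p : ℝ[I₁,I₂][X]) :
    reflect i (ofIntegralsY a b p) = ofIntegralsY a b p := by
  have h : ((reflect i : ℝ[x,y,z] →ₐ[ℝ] ℝ[x,y,z]) : ℝ[x,y,z] →+* ℝ[x,y,z]).comp
      (ofIntegralsY a b) = ofIntegralsY a b := by
    refine Polynomial.ringHom_ext' (MvPolynomial.ringHom_ext (fun r ↦ ?_) fun j ↦ ?_) ?_
    · simp
    · fin_cases i <;> fin_cases j <;> simp_all [reflect_X_of_ne]
    · simp [reflect_X_of_ne hi.symm]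
  exact DFunLike.congr_fun h p

theorem eval_ofIntegralsY (v : Fin 3 → ℝ) (p : ℝ[I₁,I₂][X]) : eval v (ofIntegralsY a b p) =
    eval ![v 0 ^ 2 + a * v 1 ^ 2, v 2 ^ 2 + b * v 1 ^ 2] (p.eval (C (v 1))) := by
  have h : (eval v).comp (ofIntegralsY a b) =
      (eval ![v 0 ^ 2 + a * v 1 ^ 2, v 2 ^ 2 + b * v 1 ^ 2]).comp
        (Polynomial.evalRingHom (C (v 1))) := by
    refine Polynomial.ringHom_ext' (MvPolynomial.ringHom_ext (fun r ↦ ?_) fun j ↦ ?_) ?_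
    · simp
    · fin_cases j <;> simp
    · simp
  exact DFunLike.congr_fun h p

theorem ofIntegralsY_injective (a b : ℝ) : Function.Injective (ofIntegralsY a b) := by
  refine (injective_iff_map_eq_zero _).2 fun p hp ↦ ?_
  have hroot (y : ℝ) : p.IsRoot (C y) := by
    refine MvPolynomial.funext_set (![Set.Ici (a * y ^ 2), Set.Ici (b * y ^ 2)])
      (fun i ↦ by fin_cases i <;> exact Set.Ici_infinite _) fun w hw ↦ ?_
    have h0 : a * y ^ 2 ≤ w 0 := hw 0 (Set.mem_univ _)
    have h1 : b * y ^ 2 ≤ w 1 := hw 1 (Set.mem_univ _)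
    have hv := eval_ofIntegralsY (a := a) (b := b) ![√(w 0 - a * y ^ 2), y, √(w 1 - b * y ^ 2)] p
    simp only [hp, map_zero, Matrix.cons_val_zero, Matrix.cons_val_one, Matrix.cons_val,
      Real.sq_sqrt (sub_nonneg.2 h0), Real.sq_sqrt (sub_nonneg.2 h1), sub_add_cancel] at hv
    rw [map_zero, hv]
    congr 2
    ext i
    fin_cases i <;> rfl
  refine Polynomial.eq_zero_of_infinite_isRoot p <|
    (Set.infinite_range_of_injective (MvPolynomial.C_injective (Fin 2) ℝ)).mono ?_
  rintro _ ⟨y, rfl⟩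
  exact hroot y

theorem ofIntegrals_injective (a b : ℝ) : Function.Injective (ofIntegrals a b) := fun H K h ↦
  Polynomial.C_injective (ofIntegralsY_injective a b (by simpa using h))

theorem ofParityParts_eq_zero {α β γ δ : ℝ[I₁,I₂][X]} (h : ofParityParts a b α β γ δ = 0) :
    α = 0 ∧ β = 0 ∧ γ = 0 ∧ δ = 0 := by
  have hx := congrArg (reflect 0) h
  have hz := congrArg (reflect 2) h
  have hxz := congrArg (reflect 0) hz
  have h0 (p : ℝ[I₁,I₂][X]) := reflect_ofIntegralsY (a := a) (b := b) (i := 0) (by decide) p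
  have h2 (p : ℝ[I₁,I₂][X]) := reflect_ofIntegralsY (a := a) (b := b) (i := 2) (by decide) p
  have h02 := reflect_X_of_ne (R := ℝ) (show (2 : Fin 3) ≠ 0 by decide)
  have h20 := reflect_X_of_ne (R := ℝ) (show (0 : Fin 3) ≠ 2 by decide)
  simp only [ofParityParts, map_add, map_mul, map_neg, map_zero, reflect_X_self, h0, h2, h02, h20]
    at h hx hz hxz
  have hinj {c p} (hc : c ≠ 0) (hp : 4 * c * ofIntegralsY a b p = 0) : p = 0 :=
    ofIntegralsY_injective a b (by simpa [hc] using hp)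
  refine ⟨hinj one_ne_zero ?_, hinj (X_ne_zero 0) ?_, hinj (X_ne_zero 2) ?_,
    hinj (mul_ne_zero (X_ne_zero 0) (X_ne_zero 2)) ?_⟩
  · linear_combination h + hx + hz + hxz
  · linear_combination h - hx + hz - hxz
  · linear_combination h + hx - hz - hxz
  · linear_combination h - hx - hz + hxz

end EulerTop

section EulerTopImage

variable {a b : ℝ}

theorem natDegree_xSq_le (a : ℝ) : (xSq a).natDegree ≤ 2 := by
  unfold xSq; compute_degree

theorem natDegree_zSq_le (b : ℝ) : (zSq b).natDegree ≤ 2 := by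
  unfold zSq; compute_degree

theorem coeff_two_xSq (a : ℝ) : (xSq a).coeff 2 = -C a := by
  simp [xSq]

theorem coeff_two_zSq (b : ℝ) : (zSq b).coeff 2 = -C b := by
  simp [zSq]

theorem natDegree_xSq (ha : a ≠ 0) : (xSq a).natDegree = 2 :=
  Polynomial.natDegree_eq_of_le_of_coeff_ne_zero (natDegree_xSq_le a) (by simpa [coeff_two_xSq])

theorem natDegree_zSq (hb : b ≠ 0) : (zSq b).natDegree = 2 :=
  Polynomial.natDegree_eq_of_le_of_coeff_ne_zero (natDegree_zSq_le b) (by simpa [coeff_two_zSq])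

theorem natDegree_xSq_mul_zSq_le (a b : ℝ) : (xSq a * zSq b).natDegree ≤ 4 :=
  Polynomial.natDegree_mul_le_of_le (natDegree_xSq_le a) (natDegree_zSq_le b)

theorem coeff_four_xSq_mul_zSq (a b : ℝ) : (xSq a * zSq b).coeff 4 = C (a * b) := by
  have h := Polynomial.coeff_mul_add_eq_of_natDegree_le (natDegree_xSq_le a) (natDegree_zSq_le b)
  rw [coeff_two_xSq, coeff_two_zSq, neg_mul_neg, ← C_mul] at h
  exact h

theorem ofParityParts_injective {α β γ δ α' β' γ' δ' : ℝ[I₁,I₂][X]}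
    (h : ofParityParts a b α β γ δ = ofParityParts a b α' β' γ' δ') :
    α = α' ∧ β = β' ∧ γ = γ' ∧ δ = δ' := by
  have hsub : ofParityParts a b (α - α') (β - β') (γ - γ') (δ - δ') = 0 := by
    simp only [ofParityParts, map_sub] at h ⊢
    linear_combination h
  simpa only [sub_eq_zero] using ofParityParts_eq_zero hsub

theorem exists_parityParts_of_eulerTop_eq {f : ℝ[x,y,z]} {p q r s : ℝ[I₁,I₂][X]}
    (hf : eulerTop a b f = ofParityParts a b p q r s) :
    ∃ α β γ δ, f = ofParityParts a b α β γ δ ∧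
      twistedDerivative (xSq a * zSq b) δ = Polynomial.C (-2) * p ∧
      twistedDerivative (zSq b) γ = Polynomial.C (-2) * q ∧
      twistedDerivative (xSq a) β = Polynomial.C (-2) * r ∧
      twistedDerivative 1 α = Polynomial.C (-2) * s := by
  obtain ⟨α, β, γ, δ, rfl⟩ := exists_eq_ofParityParts a b f
  refine ⟨α, β, γ, δ, rfl, ofParityParts_injective (a := a) (b := b) ?_⟩
  have h := two_mul_eulerTop_ofParityParts (a := a) (b := b) α β γ δ
  rw [hf] at h
  simp only [ofParityParts, map_mul, map_neg, map_ofNat] at h ⊢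
  linear_combination h

theorem eq_ofIntegrals_of_eulerTop_eq_ofParityParts (ha : a ≠ 0) (hb : b ≠ 0) {f : ℝ[x,y,z]}
    {p q r : ℝ[I₁,I₂][X]} (hp : p.natDegree ≤ 2) (hq : q.natDegree = 0) (hr : r.natDegree = 0)
    (hf : eulerTop a b f = ofParityParts a b p q r 0) :
    (p = 0 ∧ q = 0 ∧ r = 0) ∧ ∃ H, f = ofIntegrals a b H := by
  obtain ⟨α, β, γ, δ, rfl, hδ, hγ, hβ, hα⟩ := exists_parityParts_of_eulerTop_eq hf
  have hdeg (t : ℝ[I₁,I₂][X]) : (Polynomial.C (-2) * t).natDegree ≤ t.natDegree :=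
    Polynomial.natDegree_C_mul_le _ _
  have hxz : (xSq a * zSq b).natDegree = 4 :=
    Polynomial.natDegree_eq_of_le_of_coeff_ne_zero (natDegree_xSq_mul_zSq_le a b)
      (by simp [coeff_four_xSq_mul_zSq, ha, hb])
  obtain rfl : δ = 0 := eq_zero_of_natDegree_twistedDerivative_lt (W := xSq a * zSq b)
    (by have := hdeg p; rw [hδ]; omega)
  obtain rfl : γ = 0 := eq_zero_of_natDegree_twistedDerivative_lt (W := zSq b)
    (by have := hdeg q; rw [hγ, natDegree_zSq hb]; omega)
  obtain rfl : β = 0 := eq_zero_of_natDegree_twistedDerivative_lt (W := xSq a)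
    (by have := hdeg r; rw [hβ, natDegree_xSq ha]; omega)
  have hzero {W t : ℝ[I₁,I₂][X]} (h : twistedDerivative W 0 = Polynomial.C (-2) * t) : t = 0 := by
    simpa [twistedDerivative] using h.symm
  have hα' : Polynomial.derivative α = 0 := by
    simpa [twistedDerivative] using hα
  refine ⟨⟨hzero hδ, hzero hγ, hzero hβ⟩, α.coeff 0, ?_⟩
  rw [← ofIntegralsY_C, ← Polynomial.eq_C_of_derivative_eq_zero hα']
  simp [ofParityParts]

theorem exists_eq_ofIntegrals_of_eulerTop_eq_zero (ha : a ≠ 0) (hb : b ≠ 0) {f : ℝ[x,y,z]}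
    (hf : eulerTop a b f = 0) : ∃ H, f = ofIntegrals a b H :=
  (eq_ofIntegrals_of_eulerTop_eq_ofParityParts (p := 0) (q := 0) (r := 0) ha hb (by simp) (by simp)
    (by simp) (hf.trans (by simp [ofParityParts]))).2

end EulerTopImage

section EulerTopDarboux

variable {a b : ℝ}

theorem exists_sq_eq_of_eulerTop_eq_y_mul {f : ℝ[x,y,z]} {k : ℝ} (hf0 : f ≠ 0)
    (hf : eulerTop a b f = C k * X 1 * f) : ∃ m : ℕ, k ^ 2 = a * b * m ^ 2 := by
  obtain ⟨α, β, γ, δ, hfeq⟩ := exists_eq_ofParityParts a b f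
  have hmul : eulerTop a b f = ofParityParts a b (Polynomial.C (C k) * Polynomial.X * α)
      (Polynomial.C (C k) * Polynomial.X * β) (Polynomial.C (C k) * Polynomial.X * γ)
      (Polynomial.C (C k) * Polynomial.X * δ) := by
    rw [hf, hfeq]
    simp only [ofParityParts, map_mul, ofIntegralsY_C, ofIntegralsY_X, ofIntegrals_C]
    ring
  obtain ⟨α', β', γ', δ', hfeq', hδ, hγ, hβ, hα⟩ := exists_parityParts_of_eulerTop_eq hmul
  obtain ⟨rfl, rfl, rfl, rfl⟩ := ofParityParts_injective (hfeq.symm.trans hfeq')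
  simp only [← mul_assoc, ← map_mul] at hα hβ hγ hδ
  have hsq {m : ℕ} (h : (-2 * C k : ℝ[I₁,I₂]) ^ 2 = C (a * b) * (2 * (m : ℝ[I₁,I₂])) ^ 2) :
      k ^ 2 = a * b * m ^ 2 := by
    have hC : (C ((-2 * k) ^ 2) : ℝ[I₁,I₂]) = C (a * b * (2 * m) ^ 2) := by
      simpa only [map_mul, map_pow, map_neg, map_ofNat, map_natCast] using h
    linear_combination C_injective (Fin 2) ℝ hC / 4
  by_cases hδα : δ = 0 ∧ α = 0
  · have hγβ : ¬(γ = 0 ∧ β = 0) := by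
      rintro ⟨rfl, rfl⟩
      obtain ⟨rfl, rfl⟩ := hδα
      exact hf0 (by simp [hfeq, ofParityParts])
    obtain ⟨m, hm⟩ := exists_sq_eq_of_twistedDerivative_eq (i := 0) (j := 1) rfl
      (natDegree_zSq_le b) (natDegree_xSq_le a) hγ hβ hγβ
    refine ⟨m, hsq ?_⟩
    rw [hm, coeff_two_xSq, coeff_two_zSq, neg_mul_neg, ← C_mul, mul_comm b]
  · obtain ⟨m, hm⟩ := exists_sq_eq_of_twistedDerivative_eq (i := 1) (j := 0) rfl
      (natDegree_xSq_mul_zSq_le a b) (by simp) hδ hα hδα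
    refine ⟨m, hsq ?_⟩
    rw [hm, coeff_four_xSq_mul_zSq, mul_zero, Polynomial.coeff_one_zero, mul_one]

theorem eulerTop_rename_swap_zero_one (ha : a ≠ 0) (f : ℝ[x,y,z]) :
    eulerTop a⁻¹ (-b / a) (rename (Equiv.swap 0 1) f) =
      -C a⁻¹ * rename (Equiv.swap 0 1) (eulerTop a b f) := by
  have hinv : (C a⁻¹ * C a : ℝ[x,y,z]) = 1 := by rw [← C_mul, inv_mul_cancel₀ ha, C_1]
  have hdiv : (C (-b / a) : ℝ[x,y,z]) = -(C a⁻¹ * C b) := by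
    rw [← C_mul, ← C_neg, neg_div, div_eq_inv_mul]
  have h := derivation_algHom_comm (d := eulerTop a⁻¹ (-b / a)) (d' := -a⁻¹ • eulerTop a b)
    (φ := rename (Equiv.swap 0 1)) (fun i ↦ ?_) f
  · rw [h]
    simp [MvPolynomial.smul_eq_C_mul]
  · have hswap : Equiv.swap (0 : Fin 3) 1 2 = 2 := by decide
    fin_cases i <;> simp only [Fin.zero_eta, Fin.mk_one, Fin.reduceFinMk, rename_X, rename_C, hswap,
      Equiv.swap_apply_left, Equiv.swap_apply_right, eulerTop_X_zero, eulerTop_X_one,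
      eulerTop_X_two, Derivation.coe_smul, Pi.smul_apply, smul_eq_C_mul, map_mul, map_neg]
    · linear_combination X 0 * X 2 * hinv
    · ring
    · linear_combination X 0 * X 1 * hdiv

theorem eulerTop_rename_swap_zero_two (f : ℝ[x,y,z]) :
    eulerTop b a (rename (Equiv.swap 0 2) f) = rename (Equiv.swap 0 2) (eulerTop a b f) := by
  have hswap : Equiv.swap (0 : Fin 3) 2 1 = 1 := by decide
  refine derivation_algHom_comm (fun i ↦ ?_) f
  fin_cases i <;> simp only [Fin.zero_eta, Fin.mk_one, Fin.reduceFinMk, rename_X, rename_C, hswap,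
    Equiv.swap_apply_left, Equiv.swap_apply_right, eulerTop_X_zero, eulerTop_X_one, eulerTop_X_two,
    map_mul, map_neg] <;> ring

theorem exists_sq_eq_of_eulerTop_eq_x_mul (ha : a ≠ 0) {f : ℝ[x,y,z]} {k : ℝ} (hf0 : f ≠ 0)
    (hf : eulerTop a b f = C k * X 0 * f) : ∃ m : ℕ, k ^ 2 = -b * m ^ 2 := by
  have hinj := rename_injective (R := ℝ) (Equiv.swap (0 : Fin 3) 1) (Equiv.injective _)
  have hswap : eulerTop a⁻¹ (-b / a) (rename (Equiv.swap 0 1) f) =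
      C (-a⁻¹ * k) * X 1 * rename (Equiv.swap 0 1) f := by
    rw [eulerTop_rename_swap_zero_one ha, hf]
    simp only [map_mul, map_neg, rename_C, rename_X, Equiv.swap_apply_left]
    ring
  obtain ⟨m, hm⟩ := exists_sq_eq_of_eulerTop_eq_y_mul ((map_ne_zero_iff _ hinj).2 hf0) hswap
  refine ⟨m, ?_⟩
  field_simp at hm
  linear_combination hm

theorem eulerTop_reflect_zero (f : ℝ[x,y,z]) :
    eulerTop a b (reflect 0 f) = reflect 0 (-eulerTop a b f) := by
  refine derivation_algHom_comm (d' := -eulerTop a b) (fun i ↦ ?_) f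
  fin_cases i <;> simp [reflect_X_of_ne]

theorem eq_zero_of_eulerTop_eq_linearForm_mul_x (ha : a ≠ 0) (hb : 0 < b) {f : ℝ[x,y,z]}
    {k : Fin 3 → ℝ} (hf0 : f ≠ 0) (hf : eulerTop a b f = linearForm k * f) : k 0 = 0 := by
  have hinj : Function.Injective (reflect (0 : Fin 3) : ℝ[x,y,z] →ₐ[ℝ] ℝ[x,y,z]) :=
    Function.Involutive.injective (reflect_reflect 0)
  have hlin : linearForm k - reflect 0 (linearForm k) = C (2 * k 0) * X 0 := by
    have hC2 : (C 2 : ℝ[x,y,z]) = 2 := map_ofNat C 2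
    have h1 := reflect_X_of_ne (R := ℝ) (show (1 : Fin 3) ≠ 0 by decide)
    have h2 := reflect_X_of_ne (R := ℝ) (show (2 : Fin 3) ≠ 0 by decide)
    simp only [linearForm, Fin.sum_univ_three, map_add, map_mul, algHom_C, algebraMap_eq,
      reflect_X_self, h1, h2, hC2]
    ring
  have hprod : eulerTop a b (f * reflect 0 f) = C (2 * k 0) * X 0 * (f * reflect 0 f) := by
    rw [Derivation.leibniz, eulerTop_reflect_zero, hf, ← hlin]
    simp only [map_neg, map_mul, smul_eq_mul]
    ring
  obtain ⟨m, hm⟩ := exists_sq_eq_of_eulerTop_eq_x_mul ha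
    (mul_ne_zero hf0 ((map_ne_zero_iff _ hinj).2 hf0)) hprod
  have : 0 ≤ b * m ^ 2 := by positivity
  nlinarith

theorem eq_zero_of_eulerTop_eq_linearForm_mul_z (ha : 0 < a) (hb : b ≠ 0) {f : ℝ[x,y,z]}
    {k : Fin 3 → ℝ} (hf0 : f ≠ 0) (hf : eulerTop a b f = linearForm k * f) : k 2 = 0 := by
  have hinj := rename_injective (R := ℝ) (Equiv.swap (0 : Fin 3) 2) (Equiv.injective _)
  refine eq_zero_of_eulerTop_eq_linearForm_mul_x (k := k ∘ Equiv.swap 0 2) hb ha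
    ((map_ne_zero_iff _ hinj).2 hf0) ?_
  rw [eulerTop_rename_swap_zero_two, hf, map_mul]
  congr 1
  have hswap : Equiv.swap (0 : Fin 3) 2 1 = 1 := by decide
  simp only [linearForm, Fin.sum_univ_three, map_add, map_mul, rename_C, rename_X, hswap,
    Equiv.swap_apply_left, Equiv.swap_apply_right, Function.comp_apply]
  ring

end EulerTopDarboux

section LinearDarboux

/-- The linear Darboux polynomial `x - ρ z` of the Euler top `ẋ = ρ² y z, ẏ = -x z, ż = x y`. -/
noncomputable def linearDarboux (ρ : ℝ) : ℝ[x,y,z] :=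
  X 0 - C ρ * X 2

variable {ρ : ℝ}

theorem linearDarboux_ne_zero (ρ : ℝ) : linearDarboux ρ ≠ 0 := by
  intro h
  simpa [linearDarboux] using congrArg (eval (Pi.single 0 1)) h

theorem isHomogeneous_linearDarboux (ρ : ℝ) : (linearDarboux ρ).IsHomogeneous 1 :=
  (isHomogeneous_X _ _).sub (isHomogeneous_C_mul_X _ _)

theorem eulerTop_linearDarboux_pow (ρ : ℝ) (m : ℕ) :
    eulerTop (ρ ^ 2) 1 (linearDarboux ρ ^ m) = -(C (ρ * m) * X 1 * linearDarboux ρ ^ m) := by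
  have hC : eulerTop (ρ ^ 2) 1 (C ρ) = 0 := (eulerTop (ρ ^ 2) 1).map_algebraMap ρ
  have hv : eulerTop (ρ ^ 2) 1 (linearDarboux ρ) = -(C ρ * X 1 * linearDarboux ρ) := by
    simp only [linearDarboux, map_sub, map_pow, map_one, Derivation.leibniz, hC, eulerTop_X_zero,
      eulerTop_X_two, smul_eq_mul]
    ring
  refine mul_left_cancel₀ (linearDarboux_ne_zero ρ) ?_
  rw [mul_derivation_pow, hv, map_mul, map_natCast]
  ring

theorem eulerTop_mul_linearDarboux_pow (F : ℝ[x,y,z]) (m : ℕ) :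
    eulerTop (ρ ^ 2) 1 (F * linearDarboux ρ ^ m) =
      (eulerTop (ρ ^ 2) 1 F - C (ρ * m) * X 1 * F) * linearDarboux ρ ^ m := by
  rw [Derivation.leibniz, eulerTop_linearDarboux_pow, smul_eq_mul, smul_eq_mul]
  ring

theorem exists_mul_linearDarboux_pow_eq_ofIntegrals (hρ : ρ ≠ 0) {F : ℝ[x,y,z]} {m : ℕ}
    (hF0 : F ≠ 0) (hF : eulerTop (ρ ^ 2) 1 F = C (ρ * m) * X 1 * F) :
    ∃ H ≠ 0, F * linearDarboux ρ ^ m = ofIntegrals (ρ ^ 2) 1 H := by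
  have hzero : eulerTop (ρ ^ 2) 1 (F * linearDarboux ρ ^ m) = 0 := by
    rw [eulerTop_mul_linearDarboux_pow, hF, sub_self, zero_mul]
  obtain ⟨H, hH⟩ :=
    exists_eq_ofIntegrals_of_eulerTop_eq_zero (pow_ne_zero 2 hρ) one_ne_zero hzero
  refine ⟨H, ?_, hH⟩
  rintro rfl
  exact mul_ne_zero hF0 (pow_ne_zero m (linearDarboux_ne_zero ρ)) (hH.trans (map_zero _))

theorem exists_sqrt_of_eulerTop_eq_y_mul {A k : ℝ} (hA : 0 < A) {F : ℝ[x,y,z]} (hF0 : F ≠ 0)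
    (hF : eulerTop A 1 F = C k * X 1 * F) : ∃ ρ ≠ 0, ∃ m : ℕ, A = ρ ^ 2 ∧ k = ρ * m := by
  obtain ⟨m, hm⟩ := exists_sq_eq_of_eulerTop_eq_y_mul hF0 hF
  have hsq : √A ^ 2 = A := Real.sq_sqrt hA.le
  have h0 : √A ≠ 0 := (Real.sqrt_pos.2 hA).ne'
  have hk : k ^ 2 = (√A * m) ^ 2 := by rw [hm, mul_one, mul_pow, hsq]
  rcases sq_eq_sq_iff_eq_or_eq_neg.1 hk with hk | hk
  · exact ⟨√A, h0, m, hsq.symm, hk⟩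
  · exact ⟨-√A, neg_ne_zero.2 h0, m, by rw [neg_sq, hsq], by rw [hk, neg_mul]⟩

end LinearDarboux

section Homogeneous

variable {a b : ℝ} {H : ℝ[I₁,I₂]} {n : ℕ}

theorem isHomogeneous_ofIntegrals (a b : ℝ) (hH : H.IsHomogeneous n) :
    (ofIntegrals a b H).IsHomogeneous (2 * n) := by
  refine hH.aeval _ fun i ↦ ?_
  have hsq (c : ℝ) (i j : Fin 3) : (X i ^ 2 + C c * X j ^ 2 : ℝ[x,y,z]).IsHomogeneous 2 :=
    (isHomogeneous_X_pow i 2).add (isHomogeneous_C_mul_X_pow c j 2)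
  fin_cases i
  · exact hsq a 0 1
  · exact hsq b 2 1

theorem homogeneousComponent_two_mul_ofIntegrals (a b : ℝ) (H : ℝ[I₁,I₂]) (j : ℕ) :
    homogeneousComponent (2 * j) (ofIntegrals a b H) =
      ofIntegrals a b (homogeneousComponent j H) :=
  homogeneousComponent_map (T := (ofIntegrals a b).toLinearMap)
    (mul_right_injective₀ two_ne_zero) (fun _ _ ↦ isHomogeneous_ofIntegrals a b) j H

theorem exists_isHomogeneous_of_ofIntegrals (hH0 : H ≠ 0)
    (hH : (ofIntegrals a b H).IsHomogeneous n) : ∃ N, n = 2 * N ∧ H.IsHomogeneous N := by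
  have hcomp (j : ℕ) (hj : homogeneousComponent j H ≠ 0) : 2 * j = n := by
    by_contra hne
    refine hj (ofIntegrals_injective a b ?_)
    rw [map_zero, ← homogeneousComponent_two_mul_ofIntegrals, homogeneousComponent_of_mem hH,
      if_neg (by omega)]
  obtain ⟨N, hN⟩ : ∃ N, homogeneousComponent N H ≠ 0 := by
    by_contra! h
    exact hH0 (eq_zero_of_homogeneousComponent_eq_zero h)
  refine ⟨N, (hcomp N hN).symm, fun d hd ↦ ?_⟩
  have hdN := hcomp d.degree fun h ↦
    hd (by simpa [coeff_homogeneousComponent] using congrArg (coeff d) h)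
  have hN' := hcomp N hN
  have hweight : Finsupp.weight 1 d = d.degree := by rw [Finsupp.degree_eq_weight_one]; rfl
  omega

end Homogeneous

section LinearPart

/-- The derivation of the linear part `ẋ = c z - σ x, ẏ = -y, ż = -z` of the
Glukhovsky–Dolzhansky system. -/
noncomputable def linearPart (c σ : ℝ) : Derivation ℝ ℝ[x,y,z] ℝ[x,y,z] :=
  mkDerivation ℝ ![C c * X 2 - C σ * X 0, -X 1, -X 2]

variable {a c σ ρ : ℝ}

@[simp] theorem linearPart_X_zero : linearPart c σ (X 0) = C c * X 2 - C σ * X 0 :=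
  mkDerivation_X ..

@[simp] theorem linearPart_X_one : linearPart c σ (X 1) = -X 1 := mkDerivation_X ..

@[simp] theorem linearPart_X_two : linearPart c σ (X 2) = -X 2 := mkDerivation_X ..

theorem linearPart_apply (f : ℝ[x,y,z]) : linearPart c σ f =
    (C c * X 2 - C σ * X 0) * pderiv 0 f - X 1 * pderiv 1 f - X 2 * pderiv 2 f := by
  have h := derivation_aeval (linearPart c σ) X f
  simp only [aeval_X_left_apply, Fin.sum_univ_three, linearPart_X_zero, linearPart_X_one,
    linearPart_X_two] at h
  linear_combination h

theorem linearPart_linearDarboux (hρ : ρ ≠ 0) : linearPart c σ (linearDarboux ρ) =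
    C (-(σ + 1) / 2 - c / (2 * ρ)) * linearDarboux ρ +
      C ((1 - σ) / 2 + c / (2 * ρ)) * (X 0 + C ρ * X 2) := by
  have hC (t : ℝ) : linearPart c σ (C t) = 0 := (linearPart c σ).map_algebraMap t
  generalize hp : -(σ + 1) / 2 - c / (2 * ρ) = p
  generalize hr : (1 - σ) / 2 + c / (2 * ρ) = r
  have hx : (C p + C r : ℝ[x,y,z]) = -C σ := by
    rw [← C_add, ← C_neg, ← hp, ← hr]
    ring_nf
  have hz : (C ρ * C r - C ρ * C p : ℝ[x,y,z]) = C c + C ρ := by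
    rw [← C_mul, ← C_mul, ← C_sub, ← C_add, ← hp, ← hr]
    congr 1
    field_simp
    ring
  simp only [linearDarboux, map_sub, Derivation.leibniz, hC, linearPart_X_zero, linearPart_X_two,
    smul_eq_mul]
  linear_combination -X 0 * hx - X 2 * hz

theorem ofIntegrals_sub_eq_linearDarboux_mul (ρ : ℝ) :
    ofIntegrals (ρ ^ 2) 1 (X 0 - C (ρ ^ 2) * X 1) = linearDarboux ρ * (X 0 + C ρ * X 2) := by
  simp only [linearDarboux, map_sub, map_mul, map_pow, map_one, ofIntegrals_C, ofIntegrals_X_zero,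
    ofIntegrals_X_one]
  ring

end LinearPart

section TwoLevels

variable {a c σ ρ k₀ : ℝ} {m : ℕ} {F F' : ℝ[x,y,z]} {H : ℝ[I₁,I₂]}

theorem eq_zero_of_eulerTop_eq_quadratic_y (ha : a ≠ 0) {f : ℝ[x,y,z]} {p q r : ℝ[I₁,I₂]}
    (hf : eulerTop a 1 f =
      ofIntegrals a 1 p + ofIntegrals a 1 q * X 1 + ofIntegrals a 1 r * X 1 ^ 2) :
    p = 0 ∧ q = 0 ∧ r = 0 := by
  have hzero := (eq_ofIntegrals_of_eulerTop_eq_ofParityParts (q := 0) (r := 0)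
    (p := Polynomial.C p + Polynomial.C q * Polynomial.X + Polynomial.C r * Polynomial.X ^ 2)
    ha one_ne_zero (by compute_degree) (by simp) (by simp) (by simpa [ofParityParts] using hf)).1.1
  have hcoeff (n : ℕ) := congrArg (Polynomial.coeff · n) hzero
  exact ⟨by simpa using hcoeff 0, by simpa [Polynomial.coeff_X, Polynomial.coeff_C] using hcoeff 1,
    by simpa [Polynomial.coeff_X, Polynomial.coeff_C] using hcoeff 2⟩

theorem mul_eulerTop_mul_linearDarboux_pow (hH : F * linearDarboux ρ ^ m = ofIntegrals (ρ ^ 2) 1 H)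
    (hF' : eulerTop (ρ ^ 2) 1 F' + linearPart c σ F = C (ρ * m) * X 1 * F' + C k₀ * F) :
    linearDarboux ρ * eulerTop (ρ ^ 2) 1 (F' * linearDarboux ρ ^ m) =
      linearDarboux ρ *
          (C k₀ * ofIntegrals (ρ ^ 2) 1 H - linearPart c σ (ofIntegrals (ρ ^ 2) 1 H)) +
        (m : ℝ[x,y,z]) * ofIntegrals (ρ ^ 2) 1 H * linearPart c σ (linearDarboux ρ) := by
  have hpow := mul_derivation_pow (linearPart c σ) (linearDarboux ρ) m
  rw [eulerTop_mul_linearDarboux_pow, ← hH, Derivation.leibniz, smul_eq_mul, smul_eq_mul]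
  linear_combination linearDarboux ρ * linearDarboux ρ ^ m * hF' + F * hpow

theorem pderiv_identities_of_two_levels (hρ : ρ ≠ 0) {p r : ℝ}
    (hv : linearPart c σ (linearDarboux ρ) = C p * linearDarboux ρ + C r * (X 0 + C ρ * X 2))
    (hH : F * linearDarboux ρ ^ m = ofIntegrals (ρ ^ 2) 1 H)
    (hF' : eulerTop (ρ ^ 2) 1 F' + linearPart c σ F = C (ρ * m) * X 1 * F' + C k₀ * F) :
    C (1 - σ) * (X 0 - C (ρ ^ 2) * X 1) * pderiv 0 H = C (m * r) * H ∧
    (X 0 - C (ρ ^ 2) * X 1) * (C (k₀ + m * p) * H + C (2 * σ) * X 0 * pderiv 0 H +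
      2 * X 1 * pderiv 1 H) + C (m * r) * H * (X 0 + C (ρ ^ 2) * X 1) = 0 := by
  -- Multiplied by `(x + ρ z) (x - ρ z)ᵐ⁺¹`, the level equation exhibits a polynomial of degree `2`
  -- in `y` over `ℝ[I₁,I₂]` in the image of the Euler top, so its coefficients vanish.
  have hpoly : eulerTop (ρ ^ 2) 1 (ofIntegrals (ρ ^ 2) 1 (X 0 - C (ρ ^ 2) * X 1) *
        (F' * linearDarboux ρ ^ m) + X 1 * ofIntegrals (ρ ^ 2) 1
          (-2 * C c * (X 0 - C (ρ ^ 2) * X 1) * pderiv 0 H + 2 * C (m * ρ * r) * H)) =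
      ofIntegrals (ρ ^ 2) 1 ((X 0 - C (ρ ^ 2) * X 1) * (C (k₀ + m * p) * H +
        C (2 * σ) * X 0 * pderiv 0 H + 2 * X 1 * pderiv 1 H) +
          C (m * r) * H * (X 0 + C (ρ ^ 2) * X 1)) + ofIntegrals (ρ ^ 2) 1 0 * X 1 +
        ofIntegrals (ρ ^ 2) 1 (2 * C (ρ ^ 2) * (C (1 - σ) * (X 0 - C (ρ ^ 2) * X 1) * pderiv 0 H -
          C (m * r) * H)) * X 1 ^ 2 := by
    have hkey := mul_eulerTop_mul_linearDarboux_pow hH hF'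
    rw [hv, derivation_ofIntegrals] at hkey
    generalize F' * linearDarboux ρ ^ m = f at hkey ⊢
    rw [map_add, Derivation.leibniz, Derivation.leibniz, eulerTop_ofIntegrals, eulerTop_ofIntegrals,
      ofIntegrals_sub_eq_linearDarboux_mul]
    simp only [linearPart_X_zero, linearPart_X_one, linearPart_X_two, eulerTop_X_one, map_zero,
      ofIntegrals_C, ofIntegrals_X_zero, ofIntegrals_X_one, map_add, map_sub, map_mul, map_neg,
      map_pow, map_one, map_natCast, map_ofNat, smul_eq_mul] at hkey ⊢
    simp only [linearDarboux] at hkey ⊢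
    linear_combination (X 0 + C ρ * X 2) * hkey
  obtain ⟨h0, -, h2⟩ := eq_zero_of_eulerTop_eq_quadratic_y (pow_ne_zero 2 hρ) hpoly
  have hC : (2 * C (ρ ^ 2) : ℝ[I₁,I₂]) ≠ 0 :=
    mul_ne_zero two_ne_zero (C_ne_zero.2 (pow_ne_zero 2 hρ))
  exact ⟨sub_eq_zero.1 ((mul_eq_zero.1 h2).resolve_left hC), h0⟩

end TwoLevels

theorem eval_single_two_ofIntegrals (a b : ℝ) (H : ℝ[I₁,I₂]) :
    eval (Pi.single 2 1) (ofIntegrals a b H) = eval (Pi.single 1 1) H := by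
  have h := eval_ofIntegralsY (a := a) (b := b) (Pi.single 2 1) (Polynomial.C H)
  rw [ofIntegralsY_C, Polynomial.eval_C] at h
  rw [h]
  congr 2
  ext i
  fin_cases i <;> simp

theorem exists_isHomogeneous_mul_linearDarboux_pow_eq {ρ : ℝ} (hρ : ρ ≠ 0) {F : ℝ[x,y,z]}
    {l m : ℕ} (hF0 : F ≠ 0) (hFl : F.IsHomogeneous l)
    (hF : eulerTop (ρ ^ 2) 1 F = C (ρ * m) * X 1 * F) :
    ∃ H N, F * linearDarboux ρ ^ m = ofIntegrals (ρ ^ 2) 1 H ∧ H ≠ 0 ∧ H.IsHomogeneous N ∧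
      l + m = 2 * N := by
  obtain ⟨H, hH0, hH⟩ := exists_mul_linearDarboux_pow_eq_ofIntegrals hρ hF0 hF
  have hhom := hFl.mul ((isHomogeneous_linearDarboux ρ).pow m)
  rw [hH, one_mul] at hhom
  obtain ⟨N, hN, hHN⟩ := exists_isHomogeneous_of_ofIntegrals hH0 hhom
  exact ⟨H, N, hH, hH0, hHN, hN⟩

section TopComponents

variable {A c σ k k₀ : ℝ} {l : ℕ} {F F' : ℝ[x,y,z]}

theorem degree_eq_of_two_levels (hA : 0 < A) (hF0 : F ≠ 0) (hFl : F.IsHomogeneous l)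
    (hF : eulerTop A 1 F = C k * X 1 * F)
    (hF' : eulerTop A 1 F' + linearPart c σ F = C k * X 1 * F' + C k₀ * F) :
    (l : ℝ) = c * k / A - k₀ := by
  obtain ⟨ρ, hρ, m, rfl, rfl⟩ := exists_sqrt_of_eulerTop_eq_y_mul hA hF0 hF
  obtain ⟨H, N, hH, hH0, hHN, hlN⟩ := exists_isHomogeneous_mul_linearDarboux_pow_eq hρ hF0 hFl hF
  obtain ⟨h₁, h₂⟩ := pderiv_identities_of_two_levels hρ (linearPart_linearDarboux hρ) hH hF'
  have heuler : X 0 * pderiv 0 H + X 1 * pderiv 1 H = C (N : ℝ) * H := by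
    simpa [Fin.sum_univ_two] using hHN.sum_X_mul_pderiv
  have hΔ : (X 0 - C (ρ ^ 2) * X 1 : ℝ[I₁,I₂]) ≠ 0 := fun h ↦ by
    simpa using congrArg (eval (Pi.single 0 1)) h
  generalize hp : -(σ + 1) / 2 - c / (2 * ρ) = p at h₁ h₂
  generalize hr : (1 - σ) / 2 + c / (2 * ρ) = r at h₁ h₂
  have hzero : C (k₀ + m * p + 2 * N - m * r) * ((X 0 - C (ρ ^ 2) * X 1) * H) = 0 := by
    simp only [map_sub, map_add, map_mul, map_ofNat, map_one, map_natCast] at h₁ h₂ heuler ⊢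
    linear_combination h₂ - 2 * (X 0 - C (ρ ^ 2) * X 1) * heuler + 2 * X 0 * h₁
  have hcoeff := C_eq_zero.1 ((mul_eq_zero.1 hzero).resolve_right (mul_ne_zero hΔ hH0))
  have hlN' : (l + m : ℝ) = 2 * N := mod_cast hlN
  rw [← hlN', ← hp, ← hr] at hcoeff
  field_simp at hcoeff ⊢
  linear_combination hcoeff / 2

theorem cofactor_eq_zero_of_two_levels (hA : 0 < A) (hc : c ≠ 0) (hF0 : F ≠ 0)
    (hF : eulerTop A 1 F = C k * X 1 * F)
    (hF' : eulerTop A 1 F' + linearPart c 1 F = C k * X 1 * F' + C k₀ * F) : k = 0 := by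
  obtain ⟨ρ, hρ, m, rfl, rfl⟩ := exists_sqrt_of_eulerTop_eq_y_mul hA hF0 hF
  obtain ⟨H, hH0, hH⟩ := exists_mul_linearDarboux_pow_eq_ofIntegrals hρ hF0 hF
  obtain ⟨h, -⟩ := pderiv_identities_of_two_levels hρ (linearPart_linearDarboux hρ) hH hF'
  rw [sub_self, map_zero, zero_mul, zero_mul, eq_comm, mul_eq_zero, C_eq_zero] at h
  simpa [hρ, hc, hH0] using h

theorem eval_ne_zero_of_two_levels (hA : 0 < A) (hσ : σ ≠ 1) (hF0 : F ≠ 0)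
    (hFl : F.IsHomogeneous l) (hF : eulerTop A 1 F = C k * X 1 * F)
    (hF' : eulerTop A 1 F' + linearPart c σ F = C k * X 1 * F' + C k₀ * F) :
    eval (Pi.single 2 1) F ≠ 0 := by
  obtain ⟨ρ, hρ, m, rfl, rfl⟩ := exists_sqrt_of_eulerTop_eq_y_mul hA hF0 hF
  obtain ⟨H, N, hH, hH0, hHN, -⟩ := exists_isHomogeneous_mul_linearDarboux_pow_eq hρ hF0 hFl hF
  obtain ⟨h, -⟩ := pderiv_identities_of_two_levels hρ (linearPart_linearDarboux hρ) hH hF'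
  have hH1 := eval_ne_zero_of_mul_pderiv_eq hH0 hHN (by simp [sub_eq_zero, hσ.symm, hρ]) h
  rw [← eval_single_two_ofIntegrals (ρ ^ 2) 1, ← hH, map_mul] at hH1
  exact left_ne_zero_of_mul hH1

end TopComponents

section ThreeLevels

variable {a c Ra : ℝ} {N : ℕ} {G H₀ : ℝ[I₁,I₂]} {F' F'' : ℝ[x,y,z]}

theorem linearPart_one_ofIntegrals (hG : G.IsHomogeneous N) :
    linearPart c 1 (ofIntegrals a 1 G) = -(2 * (N : ℝ[x,y,z]) * ofIntegrals a 1 G) +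
      2 * C c * X 0 * X 2 * ofIntegrals a 1 (pderiv 0 G) := by
  have heuler := congrArg (ofIntegrals a 1) hG.sum_X_mul_pderiv
  simp only [Fin.sum_univ_two, map_add, map_mul, map_natCast, ofIntegrals_X_zero, ofIntegrals_X_one,
    map_one, nsmul_eq_mul] at heuler
  rw [derivation_ofIntegrals]
  simp only [linearPart_X_zero, linearPart_X_one, linearPart_X_two, map_one]
  linear_combination -2 * heuler

theorem exists_eq_add_ofIntegrals_of_second_level (ha : a ≠ 0) (hG : G.IsHomogeneous N)
    (hF' : eulerTop a 1 F' + linearPart c 1 (ofIntegrals a 1 G) =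
      -(2 * (N : ℝ[x,y,z]) * ofIntegrals a 1 G)) :
    ∃ H₀, F' = 2 * C c * X 1 * ofIntegrals a 1 (pderiv 0 G) + ofIntegrals a 1 H₀ := by
  have hzero : eulerTop a 1 (F' - ofIntegrals a 1 (2 * C c * pderiv 0 G) * X 1) = 0 := by
    rw [map_sub, Derivation.leibniz, eulerTop_ofIntegrals, eulerTop_X_one]
    simp only [map_mul, map_ofNat, ofIntegrals_C, smul_eq_mul]
    linear_combination hF' - linearPart_one_ofIntegrals (a := a) (c := c) hG
  obtain ⟨H₀, hH₀⟩ := exists_eq_ofIntegrals_of_eulerTop_eq_zero ha one_ne_zero hzero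
  refine ⟨H₀, ?_⟩
  rw [← hH₀, map_mul, map_mul, map_ofNat, ofIntegrals_C]
  ring

theorem pderiv_add_pderiv_eq_zero_of_third_level (ha : a ≠ 0) (hG : G.IsHomogeneous N)
    (hF' : F' = 2 * C c * X 1 * ofIntegrals a 1 (pderiv 0 G) + ofIntegrals a 1 H₀)
    (hF'' : eulerTop a 1 F'' + linearPart c 1 F' + C Ra * pderiv 1 (ofIntegrals a 1 G) =
      -(2 * (N : ℝ[x,y,z]) * F')) :
    C (c + a * Ra) * pderiv 0 G + C Ra * pderiv 1 G = 0 := by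
  have heuler : pderiv 0 G + X 0 * pderiv 0 (pderiv 0 G) + X 1 * pderiv 1 (pderiv 0 G) =
      (N : ℝ[I₁,I₂]) * pderiv 0 G := by
    have h := congrArg (pderiv 0) hG.sum_X_mul_pderiv
    simp only [Fin.sum_univ_two, map_add, Derivation.leibniz, pderiv_X_self, Derivation.map_natCast,
      pderiv_X_of_ne (one_ne_zero (α := Fin 2)), smul_eq_mul, nsmul_eq_mul] at h
    rw [pderiv_pderiv_comm 1 0]
    linear_combination h
  have hpoly : eulerTop a 1 (F'' -
        2 * X 1 ^ 2 * ofIntegrals a 1 (C (c ^ 2) * pderiv 0 (pderiv 0 G)) -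
        2 * X 1 * ofIntegrals a 1 (C c * pderiv 0 H₀)) =
      ofIntegrals a 1 (2 * (X 0 * pderiv 0 H₀ + X 1 * pderiv 1 H₀) - 2 * (N : ℝ[I₁,I₂]) * H₀) +
        ofIntegrals a 1 (-2 * (C (c + a * Ra) * pderiv 0 G + C Ra * pderiv 1 G)) * X 1 +
        ofIntegrals a 1 0 * X 1 ^ 2 := by
    have hι := congrArg (ofIntegrals a 1) heuler
    have hC (d : Derivation ℝ ℝ[x,y,z] ℝ[x,y,z]) (t : ℝ) : d (C t) = 0 := d.map_algebraMap t
    have h2 (d : Derivation ℝ ℝ[x,y,z] ℝ[x,y,z]) : d 2 = 0 := mod_cast d.map_natCast 2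
    have h10 : pderiv 1 (X 0 : ℝ[x,y,z]) = 0 := pderiv_X_of_ne (by decide)
    have h12 : pderiv 1 (X 2 : ℝ[x,y,z]) = 0 := pderiv_X_of_ne (by decide)
    rw [hF', derivation_ofIntegrals] at hF''
    simp only [map_add, map_sub, map_mul, map_neg, map_pow, map_one, map_zero, map_ofNat,
      map_natCast, Derivation.leibniz, Derivation.leibniz_pow, hC, h2, h10, h12, pderiv_X_self,
      eulerTop_ofIntegrals, eulerTop_X_one, derivation_ofIntegrals (linearPart c 1),
      linearPart_X_zero, linearPart_X_one, linearPart_X_two, ofIntegrals_C, ofIntegrals_X_zero,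
      ofIntegrals_X_one, smul_eq_mul, nsmul_eq_mul] at hF'' hι ⊢
    push_cast
    linear_combination hF'' + 4 * C c * X 1 * hι
  obtain ⟨-, h, -⟩ := eq_zero_of_eulerTop_eq_quadratic_y ha hpoly
  exact (mul_eq_zero.1 h).resolve_left (neg_ne_zero.2 two_ne_zero)

theorem eval_ne_zero_of_three_levels {F : ℝ[x,y,z]} {n : ℕ} (ha : a ≠ 0) (hcRa : c + a * Ra ≠ 0)
    (hF0 : F ≠ 0) (hFn : F.IsHomogeneous n) (hF : eulerTop a 1 F = 0)
    (hF' : eulerTop a 1 F' + linearPart c 1 F = -((n : ℝ[x,y,z]) * F))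
    (hF'' : eulerTop a 1 F'' + linearPart c 1 F' + C Ra * pderiv 1 F = -((n : ℝ[x,y,z]) * F')) :
    eval (Pi.single 2 1) F ≠ 0 := by
  obtain ⟨G, rfl⟩ := exists_eq_ofIntegrals_of_eulerTop_eq_zero ha one_ne_zero hF
  have hG0 : G ≠ 0 := by
    rintro rfl
    exact hF0 (map_zero _)
  obtain ⟨N, rfl, hG⟩ := exists_isHomogeneous_of_ofIntegrals hG0 hFn
  push_cast at hF' hF''
  obtain ⟨H₀, hH₀⟩ := exists_eq_add_ofIntegrals_of_second_level ha hG hF'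
  have hpde := pderiv_add_pderiv_eq_zero_of_third_level ha hG hH₀ hF''
  have heuler := hG.sum_X_mul_pderiv
  rw [Fin.sum_univ_two, nsmul_eq_mul] at heuler
  rw [eval_single_two_ofIntegrals]
  refine eval_ne_zero_of_mul_pderiv_eq hG0 hG (P := C (c + a * Ra) * X 1 - C Ra * X 0)
    (Q := -(C Ra * (N : ℝ[I₁,I₂]))) (by simpa using hcRa) ?_
  linear_combination X 1 * hpde - C Ra * heuler

end ThreeLevels

section Levels

variable {A c σ Ra : ℝ}

theorem gdDeriv_eq (A c σ Ra : ℝ) (f : ℝ[x,y,z]) : gdDeriv A c σ Ra f =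
    eulerTop A 1 f + linearPart c σ f + C Ra * pderiv 1 f := by
  rw [gdDeriv, eulerTop_apply, linearPart_apply, C_1]
  ring

theorem gdDeriv_sub_C_mul (g h : ℝ[x,y,z]) (t : ℝ) :
    gdDeriv A c σ Ra (g - C t * h) = gdDeriv A c σ Ra g - C t * gdDeriv A c σ Ra h := by
  simp only [gdDeriv_eq, map_sub, ← smul_eq_C_mul, Derivation.map_smul, smul_add, smul_sub]
  simp only [smul_eq_C_mul]
  ring

theorem isHomogeneous_eulerTop (a b : ℝ) {n : ℕ} {f : ℝ[x,y,z]} (hf : f.IsHomogeneous n) :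
    (eulerTop a b f).IsHomogeneous (n + 1) := by
  refine isHomogeneous_derivation (fun i ↦ ?_) hf
  have hCX (t : ℝ) (i j : Fin 3) : (C t * X i * X j : ℝ[x,y,z]).IsHomogeneous 2 :=
    (isHomogeneous_C_mul_X t i).mul (isHomogeneous_X _ j)
  fin_cases i
  · simpa using hCX a 1 2
  · simpa using (hCX 1 0 2).neg
  · simpa using hCX b 0 1

theorem isHomogeneous_linearPart (c σ : ℝ) {n : ℕ} {f : ℝ[x,y,z]} (hf : f.IsHomogeneous n) :
    (linearPart c σ f).IsHomogeneous n := by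
  refine isHomogeneous_derivation (r := 0) (fun i ↦ ?_) hf
  fin_cases i
  · simpa using (isHomogeneous_C_mul_X c (2 : Fin 3)).sub (isHomogeneous_C_mul_X σ 0)
  · simpa using (isHomogeneous_X ℝ (1 : Fin 3)).neg
  · simpa using (isHomogeneous_X ℝ (2 : Fin 3)).neg

theorem homogeneousComponent_gdDeriv (n : ℕ) (f : ℝ[x,y,z]) :
    homogeneousComponent n (gdDeriv A c σ Ra f) =
      eulerTop A 1 (prevComponent n f) + linearPart c σ (homogeneousComponent n f) +
        C Ra * pderiv 1 (homogeneousComponent (n + 1) f) := by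
  have hquad := homogeneousComponent_map_eq_map_prevComponent
    (T := (eulerTop A 1).toLinearMap) (fun _ _ ↦ isHomogeneous_eulerTop A 1) n f
  have hlin := homogeneousComponent_map
    (T := (linearPart c σ).toLinearMap) Function.injective_id
    (fun _ _ ↦ isHomogeneous_linearPart c σ) n f
  rw [gdDeriv_eq, map_add, map_add, homogeneousComponent_C_mul, homogeneousComponent_pderiv]
  exact congrArg₂ _ (congrArg₂ _ hquad hlin) rfl

theorem totalDegree_gdDeriv_le (A c σ Ra : ℝ) (f : ℝ[x,y,z]) :
    (gdDeriv A c σ Ra f).totalDegree ≤ f.totalDegree + 1 := by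
  by_contra! hlt
  refine leadingForm_ne_zero (f := gdDeriv A c σ Ra f)
    (fun h ↦ by simp [h] at hlt) ?_
  rw [leadingForm]
  generalize (gdDeriv A c σ Ra f).totalDegree = n at hlt ⊢
  obtain ⟨n, rfl⟩ : ∃ m, n = m + 1 := ⟨n - 1, by omega⟩
  rw [homogeneousComponent_gdDeriv, prevComponent, homogeneousComponent_eq_zero n f (by omega),
    homogeneousComponent_eq_zero (n + 1) f (by omega),
    homogeneousComponent_eq_zero (n + 1 + 1) f (by omega)]
  simp only [map_zero, mul_zero, add_zero]

theorem exists_cofactor_eq_C_add_linearForm {h K : ℝ[x,y,z]} (hh : h ≠ 0)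
    (hK : gdDeriv A c σ Ra h = K * h) : ∃ k₀ k, K = C k₀ + linearForm k := by
  refine exists_eq_C_add_linearForm ?_
  rcases eq_or_ne K 0 with rfl | hK0
  · simp
  · have hdeg := totalDegree_gdDeriv_le A c σ Ra h
    rw [hK, totalDegree_mul_of_isDomain hK0 hh] at hdeg
    omega

end Levels

section Darboux

variable {A c σ Ra k₀ : ℝ} {k : Fin 3 → ℝ} {f : ℝ[x,y,z]}

theorem level_eq_of_darboux (hf : gdDeriv A c σ Ra f = (C k₀ + linearForm k) * f) (n : ℕ) :
    eulerTop A 1 (prevComponent n f) + linearPart c σ (homogeneousComponent n f) +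
        C Ra * pderiv 1 (homogeneousComponent (n + 1) f) =
      C k₀ * homogeneousComponent n f + linearForm k * prevComponent n f := by
  rw [← homogeneousComponent_gdDeriv, hf, homogeneousComponent_affine_mul]

theorem eulerTop_leadingForm (hf : gdDeriv A c σ Ra f = (C k₀ + linearForm k) * f) :
    eulerTop A 1 (leadingForm f) = linearForm k * leadingForm f := by
  have h := level_eq_of_darboux hf (f.totalDegree + 1)
  rw [homogeneousComponent_eq_zero _ f (Nat.lt_succ_self _),
    homogeneousComponent_eq_zero _ f (by omega), prevComponent] at h
  simpa only [leadingForm, map_zero, mul_zero, add_zero, zero_add] using h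

theorem linearForm_eq_C_mul_X_one (hA : 0 < A) (hf0 : f ≠ 0)
    (hf : gdDeriv A c σ Ra f = (C k₀ + linearForm k) * f) : linearForm k = C (k 1) * X 1 := by
  have hlead := eulerTop_leadingForm hf
  have h0 := eq_zero_of_eulerTop_eq_linearForm_mul_x hA.ne' one_pos (leadingForm_ne_zero hf0) hlead
  have h2 := eq_zero_of_eulerTop_eq_linearForm_mul_z hA one_ne_zero (leadingForm_ne_zero hf0) hlead
  rw [linearForm, Fin.sum_univ_three, h0, h2, map_zero, zero_mul, zero_mul, zero_add, add_zero]

theorem eulerTop_leadingForm_eq_y_mul (hA : 0 < A) (hf0 : f ≠ 0)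
    (hf : gdDeriv A c σ Ra f = (C k₀ + linearForm k) * f) :
    eulerTop A 1 (leadingForm f) = C (k 1) * X 1 * leadingForm f := by
  rw [eulerTop_leadingForm hf, linearForm_eq_C_mul_X_one hA hf0 hf]

theorem eulerTop_prevComponent_totalDegree (hA : 0 < A) (hf0 : f ≠ 0)
    (hf : gdDeriv A c σ Ra f = (C k₀ + linearForm k) * f) :
    eulerTop A 1 (prevComponent f.totalDegree f) + linearPart c σ (leadingForm f) =
      C (k 1) * X 1 * prevComponent f.totalDegree f + C k₀ * leadingForm f := by
  have h := level_eq_of_darboux hf f.totalDegree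
  rw [homogeneousComponent_eq_zero _ f (Nat.lt_succ_self _), map_zero, mul_zero, add_zero,
    linearForm_eq_C_mul_X_one hA hf0 hf] at h
  exact h.trans (add_comm _ _)

theorem totalDegree_eq_of_darboux (hA : 0 < A) (hf0 : f ≠ 0)
    (hf : gdDeriv A c σ Ra f = (C k₀ + linearForm k) * f) :
    (f.totalDegree : ℝ) = c * k 1 / A - k₀ :=
  degree_eq_of_two_levels hA (leadingForm_ne_zero hf0) (isHomogeneous_leadingForm f)
    (eulerTop_leadingForm_eq_y_mul hA hf0 hf) (eulerTop_prevComponent_totalDegree hA hf0 hf)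

theorem exists_level_eq_prevComponent (hf : gdDeriv A c σ Ra f = (C k₀ + linearForm k) * f)
    (n : ℕ) : ∃ F, eulerTop A 1 F + linearPart c σ (prevComponent n f) +
      C Ra * pderiv 1 (homogeneousComponent n f) = C k₀ * prevComponent n f + linearForm k * F := by
  rcases n with _ | n
  · exact ⟨0, by simp [prevComponent]⟩
  · exact ⟨prevComponent n f, level_eq_of_darboux hf n⟩

theorem eval_leadingForm_ne_zero_of_sigma_eq_one (hA : 0 < A) (hc : c ≠ 0) (hcRa : c + A * Ra ≠ 0)
    (hf0 : f ≠ 0) (hf : gdDeriv A c 1 Ra f = (C k₀ + linearForm k) * f) :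
    eval (Pi.single 2 1) (leadingForm f) ≠ 0 := by
  have hlead := eulerTop_leadingForm_eq_y_mul hA hf0 hf
  have hprev := eulerTop_prevComponent_totalDegree hA hf0 hf
  have hk : k 1 = 0 :=
    cofactor_eq_zero_of_two_levels hA hc (leadingForm_ne_zero hf0) hlead hprev
  have hk₀ : k₀ = -f.totalDegree := by
    linear_combination totalDegree_eq_of_darboux hA hf0 hf + c / A * hk
  obtain ⟨F, hF⟩ := exists_level_eq_prevComponent hf f.totalDegree
  simp only [linearForm_eq_C_mul_X_one hA hf0 hf, hk, hk₀, map_zero, map_neg, map_natCast,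
    zero_mul, zero_add, add_zero, neg_mul] at hlead hprev hF
  exact eval_ne_zero_of_three_levels hA.ne' hcRa (leadingForm_ne_zero hf0)
    (isHomogeneous_leadingForm f) hlead hprev hF

theorem eval_leadingForm_ne_zero (hA : 0 < A) (hσ : σ = 1 → c ≠ 0 ∧ c + A * Ra ≠ 0) (hf0 : f ≠ 0)
    (hf : gdDeriv A c σ Ra f = (C k₀ + linearForm k) * f) :
    eval (Pi.single 2 1) (leadingForm f) ≠ 0 := by
  rcases eq_or_ne σ 1 with rfl | hσ1
  · exact eval_leadingForm_ne_zero_of_sigma_eq_one hA (hσ rfl).1 (hσ rfl).2 hf0 hf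
  · exact eval_ne_zero_of_two_levels hA hσ1 (leadingForm_ne_zero hf0) (isHomogeneous_leadingForm f)
      (eulerTop_leadingForm_eq_y_mul hA hf0 hf) (eulerTop_prevComponent_totalDegree hA hf0 hf)

theorem exists_eq_C_mul_of_darboux (hA : 0 < A) (hσ : σ = 1 → c ≠ 0 ∧ c + A * Ra ≠ 0)
    {g h : ℝ[x,y,z]} (hh0 : h ≠ 0) (hh : gdDeriv A c σ Ra h = (C k₀ + linearForm k) * h)
    (hg : gdDeriv A c σ Ra g = (C k₀ + linearForm k) * g) : ∃ t : ℝ, g = C t * h := by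
  have hhev := eval_leadingForm_ne_zero hA hσ hh0 hh
  set t := eval (Pi.single 2 1) (homogeneousComponent h.totalDegree g) /
    eval (Pi.single 2 1) (leadingForm h) with ht
  refine ⟨t, sub_eq_zero.1 ?_⟩
  by_contra hq0
  have hq : gdDeriv A c σ Ra (g - C t * h) = (C k₀ + linearForm k) * (g - C t * h) := by
    rw [gdDeriv_sub_C_mul, hg, hh]
    ring
  have hdeg : (g - C t * h).totalDegree = h.totalDegree := by
    have := totalDegree_eq_of_darboux hA hq0 hq
    rw [← totalDegree_eq_of_darboux hA hh0 hh] at this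
    exact_mod_cast this
  refine eval_leadingForm_ne_zero hA hσ hq0 hq ?_
  rw [leadingForm, hdeg, map_sub, homogeneousComponent_C_mul, ← leadingForm, map_sub, map_mul,
    eval_C, ht, div_mul_cancel₀ _ hhev, sub_self]

end Darboux

section EulerTopEigenvectors

variable {A c σ k : ℝ} {F G : ℝ[x,y,z]} {l n : ℕ}

theorem even_add_of_eulerTop_eq_y_mul (hA : 0 < A) (hF0 : F ≠ 0) (hFl : F.IsHomogeneous l)
    (hF : eulerTop A 1 F = C k * X 1 * F) (hG0 : G ≠ 0) (hGn : G.IsHomogeneous n)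
    (hG : eulerTop A 1 G = C k * X 1 * G) : Even (l + n) := by
  obtain ⟨ρ, hρ, m, rfl, rfl⟩ := exists_sqrt_of_eulerTop_eq_y_mul hA hF0 hF
  obtain ⟨-, N, -, -, -, hN⟩ := exists_isHomogeneous_mul_linearDarboux_pow_eq hρ hF0 hFl hF
  obtain ⟨-, M, -, -, -, hM⟩ := exists_isHomogeneous_mul_linearDarboux_pow_eq hρ hG0 hGn hG
  exact ⟨N + M - m, by omega⟩

theorem linearForm_eq_zero_of_eulerTop_eq_add (hA : 0 < A) (hF0 : F ≠ 0)
    (hF : eulerTop A 1 F = C k * X 1 * F) {s : Fin 3 → ℝ}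
    (hG : eulerTop A 1 G = C k * X 1 * G + linearForm s * F) :
    linearForm s = (0 : ℝ[x,y,z]) := by
  obtain ⟨ρ, hρ, m, rfl, rfl⟩ := exists_sqrt_of_eulerTop_eq_y_mul hA hF0 hF
  obtain ⟨H, hH0, hH⟩ := exists_mul_linearDarboux_pow_eq_ofIntegrals hρ hF0 hF
  have hparts : eulerTop (ρ ^ 2) 1 (G * linearDarboux ρ ^ m) = ofParityParts (ρ ^ 2) 1
      (Polynomial.C (C (s 1) * H) * Polynomial.X) (Polynomial.C (C (s 0) * H))
      (Polynomial.C (C (s 2) * H)) 0 := by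
    rw [eulerTop_mul_linearDarboux_pow, hG]
    simp only [ofParityParts, map_mul, map_zero, ofIntegralsY_C, ofIntegralsY_X, ofIntegrals_C,
      ← hH, linearForm, Fin.sum_univ_three]
    ring
  have hdeg : (Polynomial.C (C (s 1) * H) * Polynomial.X).natDegree ≤ 2 := by compute_degree!
  obtain ⟨⟨h1, h0, h2⟩, -⟩ := eq_ofIntegrals_of_eulerTop_eq_ofParityParts (pow_ne_zero 2 hρ)
    one_ne_zero hdeg (Polynomial.natDegree_C _) (Polynomial.natDegree_C _) hparts
  simp only [mul_eq_zero, Polynomial.C_eq_zero, C_eq_zero, hH0, Polynomial.X_ne_zero, or_false]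
    at h0 h1 h2
  simp only [linearForm, Fin.sum_univ_three, h0, h1, h2, map_zero, zero_mul, add_zero]

theorem eval_single_two_eulerTop (a b : ℝ) (F : ℝ[x,y,z]) :
    eval (Pi.single 2 1) (eulerTop a b F) = 0 := by
  simp [eulerTop_apply]

theorem eval_single_two_linearPart (hA : A ≠ 0) (hFn : F.IsHomogeneous n)
    (hF : eulerTop A 1 F = C k * X 1 * F) : eval (Pi.single 2 1) (linearPart c σ F) =
      (c * k / A - n) * eval (Pi.single 2 1) F := by
  have hz : eval (Pi.single 2 1) (pderiv 2 F) = n * eval (Pi.single 2 1) F := by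
    simpa [Fin.sum_univ_three] using congrArg (eval (Pi.single 2 1)) hFn.sum_X_mul_pderiv
  have hx : eval (Pi.single 2 1) (pderiv 0 F) * A = eval (Pi.single 2 1) F * k := by
    rw [eulerTop_apply] at hF
    simpa [pderiv_X] using congrArg (fun f ↦ eval (Pi.single 2 1) (pderiv 1 f)) hF
  have hS : eval (Pi.single 2 1) (linearPart c σ F) =
      c * eval (Pi.single 2 1) (pderiv 0 F) - eval (Pi.single 2 1) (pderiv 2 F) := by
    simp [linearPart_apply]
  rw [hS, hz]
  field_simp
  linear_combination c * hx

end EulerTopEigenvectors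

section ExponentialFactor

variable {A c σ Ra k₀ s₀ : ℝ} {k s : Fin 3 → ℝ} {g h : ℝ[x,y,z]}

theorem level_eq_of_exponentialFactor
    (hg : gdDeriv A c σ Ra g = (C k₀ + linearForm k) * g + (C s₀ + linearForm s) * h) (n : ℕ) :
    eulerTop A 1 (prevComponent n g) + linearPart c σ (homogeneousComponent n g) +
        C Ra * pderiv 1 (homogeneousComponent (n + 1) g) =
      C k₀ * homogeneousComponent n g + linearForm k * prevComponent n g +
        (C s₀ * homogeneousComponent n h + linearForm s * prevComponent n h) := by
  rw [← homogeneousComponent_gdDeriv, hg, map_add, homogeneousComponent_affine_mul,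
    homogeneousComponent_affine_mul]

theorem eulerTop_leadingForm_of_exponentialFactor (hlt : h.totalDegree < g.totalDegree)
    (hg : gdDeriv A c σ Ra g = (C k₀ + linearForm k) * g + (C s₀ + linearForm s) * h) :
    eulerTop A 1 (leadingForm g) = linearForm k * leadingForm g := by
  have h' := level_eq_of_exponentialFactor hg (g.totalDegree + 1)
  rw [homogeneousComponent_eq_zero _ g (by omega), homogeneousComponent_eq_zero _ g (by omega),
    homogeneousComponent_eq_zero _ h (by omega), prevComponent, prevComponent,
    homogeneousComponent_eq_zero _ h hlt] at h'
  simpa only [leadingForm, map_zero, mul_zero, add_zero, zero_add] using h'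

theorem eulerTop_prevComponent_totalDegree_of_exponentialFactor
    (hlt : h.totalDegree + 1 < g.totalDegree)
    (hg : gdDeriv A c σ Ra g = (C k₀ + linearForm k) * g + (C s₀ + linearForm s) * h) :
    eulerTop A 1 (prevComponent g.totalDegree g) + linearPart c σ (leadingForm g) =
      linearForm k * prevComponent g.totalDegree g + C k₀ * leadingForm g := by
  have h' := level_eq_of_exponentialFactor hg g.totalDegree
  have hprev0 : prevComponent g.totalDegree h = 0 := by
    obtain ⟨n, hn⟩ : ∃ n, g.totalDegree = n + 1 := ⟨g.totalDegree - 1, by omega⟩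
    rw [hn, prevComponent, homogeneousComponent_eq_zero _ h (by omega)]
  rw [homogeneousComponent_eq_zero _ g (Nat.lt_succ_self _), hprev0,
    homogeneousComponent_eq_zero _ h (by omega)] at h'
  simp only [map_zero, mul_zero, add_zero] at h'
  exact h'.trans (add_comm _ _)

theorem totalDegree_le_of_exponentialFactor (hA : 0 < A) (hh0 : h ≠ 0)
    (hh : gdDeriv A c σ Ra h = (C k₀ + linearForm k) * h)
    (hg : gdDeriv A c σ Ra g = (C k₀ + linearForm k) * g + (C s₀ + linearForm s) * h) :
    g.totalDegree ≤ h.totalDegree := by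
  by_contra! hlt
  have hg0 : g ≠ 0 := by
    rintro rfl
    exact not_lt_zero (totalDegree_zero (R := ℝ) ▸ hlt)
  have hk := linearForm_eq_C_mul_X_one hA hh0 hh
  have hlead := eulerTop_leadingForm_of_exponentialFactor hlt hg
  rw [hk] at hlead
  have hne : g.totalDegree ≠ h.totalDegree + 1 := fun hdeg ↦ by
    have heven := even_add_of_eulerTop_eq_y_mul hA (leadingForm_ne_zero hg0)
      (isHomogeneous_leadingForm g) hlead (leadingForm_ne_zero hh0) (isHomogeneous_leadingForm h)
      (eulerTop_leadingForm_eq_y_mul hA hh0 hh)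
    rw [hdeg, Nat.even_iff] at heven
    omega
  have hprev := eulerTop_prevComponent_totalDegree_of_exponentialFactor (by omega) hg
  rw [hk] at hprev
  have hdeg := degree_eq_of_two_levels hA (leadingForm_ne_zero hg0) (isHomogeneous_leadingForm g)
    hlead hprev
  rw [← totalDegree_eq_of_darboux hA hh0 hh, Nat.cast_inj] at hdeg
  exact hlt.ne' hdeg

theorem cofactor_eq_zero_of_exponentialFactor (hA : 0 < A)
    (hσ : σ = 1 → c ≠ 0 ∧ c + A * Ra ≠ 0) (hh0 : h ≠ 0)
    (hh : gdDeriv A c σ Ra h = (C k₀ + linearForm k) * h)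
    (hg : gdDeriv A c σ Ra g = (C k₀ + linearForm k) * g + (C s₀ + linearForm s) * h) :
    (C s₀ + linearForm s : ℝ[x,y,z]) = 0 := by
  have hdeg := totalDegree_le_of_exponentialFactor hA hh0 hh hg
  have hk := linearForm_eq_C_mul_X_one hA hh0 hh
  have hlead := eulerTop_leadingForm_eq_y_mul hA hh0 hh
  have hg' : eulerTop A 1 (homogeneousComponent h.totalDegree g) =
      C (k 1) * X 1 * homogeneousComponent h.totalDegree g + linearForm s * leadingForm h := by
    have h' := level_eq_of_exponentialFactor hg (h.totalDegree + 1)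
    rw [homogeneousComponent_eq_zero _ g (by omega), homogeneousComponent_eq_zero _ g (by omega),
      homogeneousComponent_eq_zero _ h (by omega), hk, prevComponent, prevComponent] at h'
    simpa only [leadingForm, map_zero, mul_zero, add_zero, zero_add] using h'
  have hs := linearForm_eq_zero_of_eulerTop_eq_add hA (leadingForm_ne_zero hh0) hlead hg'
  rw [hs, zero_mul, add_zero] at hg'
  have hs₀ : s₀ * eval (Pi.single 2 1) (leadingForm h) = 0 := by
    have h' := congrArg (eval (Pi.single 2 1))
      (level_eq_of_exponentialFactor hg h.totalDegree)
    rw [homogeneousComponent_eq_zero _ g (by omega : g.totalDegree < h.totalDegree + 1), hs, hk,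
      map_add, map_add, eval_single_two_eulerTop, eval_single_two_linearPart hA.ne'
        (homogeneousComponent_isHomogeneous _ g) hg', totalDegree_eq_of_darboux hA hh0 hh] at h'
    have hy : (Pi.single 2 1 : Fin 3 → ℝ) 1 = 0 := Pi.single_eq_of_ne (by decide) 1
    simp only [map_add, map_mul, map_zero, eval_C, eval_X, hy, zero_mul, mul_zero, add_zero,
      zero_add] at h'
    rw [leadingForm]
    linear_combination -h'
  rw [hs, (mul_eq_zero.1 hs₀).resolve_right (eval_leadingForm_ne_zero hA hσ hh0 hh), map_zero,
    add_zero]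

theorem exists_eq_C_mul_of_exponentialFactor (hA : 0 < A)
    (hσ : σ = 1 → c ≠ 0 ∧ c + A * Ra ≠ 0) {K L : ℝ[x,y,z]} (hh0 : h ≠ 0)
    (hL : L.totalDegree ≤ 1) (hh : gdDeriv A c σ Ra h = K * h)
    (hg : gdDeriv A c σ Ra g = K * g + L * h) : ∃ t : ℝ, g = C t * h := by
  obtain ⟨k₀, k, rfl⟩ := exists_cofactor_eq_C_add_linearForm hh0 hh
  obtain ⟨s₀, s, rfl⟩ := exists_eq_C_add_linearForm hL
  rw [cofactor_eq_zero_of_exponentialFactor hA hσ hh0 hh hg, zero_mul, add_zero] at hg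
  exact exists_eq_C_mul_of_darboux hA hσ hh0 hh hg

end ExponentialFactor

end GlukhovskyDolzhansky

open GlukhovskyDolzhansky in
theorem gd_no_exponential_factors_general
    (A C σ Ra : ℝ) (hA : 0 < A) (hσ : σ = 1 → C ≠ 0 ∧ C + A * Ra ≠ 0)
    (g h L : MvPolynomial (Fin 3) ℝ) (hh : h ≠ 0) (hcop : IsRelPrime g h)
    (hL : L.totalDegree ≤ 1)
    (hexp : h * gdDeriv A C σ Ra g - g * gdDeriv A C σ Ra h = L * h ^ 2) :
    (∃ c : ℝ, g = MvPolynomial.C c) ∧ (∃ c : ℝ, h = MvPolynomial.C c) := by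
  obtain ⟨K, hK⟩ : h ∣ gdDeriv A C σ Ra h :=
    hcop.symm.dvd_of_dvd_mul_left ⟨gdDeriv A C σ Ra g - L * h, by linear_combination -hexp⟩
  have hg : gdDeriv A C σ Ra g = K * g + L * h :=
    mul_left_cancel₀ hh (by linear_combination hexp + g * hK)
  obtain ⟨t, rfl⟩ := exists_eq_C_mul_of_exponentialFactor hA hσ hh hL (hK.trans (mul_comm h K)) hg
  obtain ⟨r, -, rfl⟩ := isUnit_iff_eq_C_of_isReduced.1 (hcop (dvd_mul_left h _) dvd_rfl)
  exact ⟨⟨t * r, (map_mul MvPolynomial.C t r).symm⟩, r, rfl⟩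

/-- For positive parameters, the Glukhovsky–Dolzhansky system has no
exponential factors: if `exp(g/h)` (with `g, h` coprime, `h ≠ 0`) has a polynomial
cofactor `L` of degree at most 1, i.e. `h·X(g) − g·X(h) = L·h²`, then `g` and `h`
are both constant. -/
theorem gd_no_exponential_factors
    (A C σ Ra : ℝ) (hA : 0 < A) (hC : 0 < C) (hσ : 0 < σ) (hRa : 0 < Ra)
    (g h L : MvPolynomial (Fin 3) ℝ) (hh : h ≠ 0) (hcop : IsRelPrime g h)
    (hL : L.totalDegree ≤ 1)
    (hexp : h * gdDeriv A C σ Ra g - g * gdDeriv A C σ Ra h = L * h ^ 2) :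
    (∃ c : ℝ, g = MvPolynomial.C c) ∧ (∃ c : ℝ, h = MvPolynomial.C c) :=
  gd_no_exponential_factors_general A C σ Ra hA (fun _ ↦ ⟨hC.ne', by positivity⟩) g h L hh hcop hL
    hexp
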